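/- arXiv:2411.11482 — 4 statements merged into one kernel-verified Lean document; each statement's English description precedes it below -/
import Mathlib

section
/- Under the uniform distribution on S_n(132), conditioned on σ_j = n (with 1 ≤ j ≤ n-1), the permutations red(σ_1⋯σ_{j-1}) and σ_{j+1}⋯σ_n are independent, with distributions uniform on S_{j-1}(132) and uniform on S_{n-j}(132) respectively. -/
/-- `σ` avoids the pattern 132. -/
def Avoids132 {n : ℕ} (σ : Equiv.Perm (Fin n)) : Prop :=
  ¬ ∃ i₁ i₂ i₃ : Fin n, i₁ < i₂ ∧ i₂ < i₃ ∧ σ i₁ < σ i₃ ∧ σ i₃ < σ i₂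

/-- The function underlying the gluing of two permutations around the maximum. -/
def glueFun {a m n : ℕ} (h : a + 1 + m = n) (τ₁ : Equiv.Perm (Fin a))
    (τ₂ : Equiv.Perm (Fin m)) (i : Fin n) : Fin n :=
  if h1 : (i : ℕ) < a then ⟨m + (τ₁ ⟨i, h1⟩ : ℕ), by have := (τ₁ ⟨i, h1⟩).isLt; omega⟩
  else if h2 : (i : ℕ) = a then ⟨n - 1, by omega⟩
  else ⟨(τ₂ ⟨(i : ℕ) - a - 1, by have := i.isLt; omega⟩ : ℕ), by
    have := (τ₂ ⟨(i : ℕ) - a - 1, by have := i.isLt; omega⟩).isLt; omega⟩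

theorem glueFun_left {a m n : ℕ} (h : a + 1 + m = n) (τ₁ : Equiv.Perm (Fin a))
    (τ₂ : Equiv.Perm (Fin m)) (i : Fin n) (h1 : (i : ℕ) < a) :
    (glueFun h τ₁ τ₂ i : ℕ) = m + (τ₁ ⟨i, h1⟩ : ℕ) := by
  simp [glueFun, h1]

theorem glueFun_mid {a m n : ℕ} (h : a + 1 + m = n) (τ₁ : Equiv.Perm (Fin a))
    (τ₂ : Equiv.Perm (Fin m)) (i : Fin n) (h1 : (i : ℕ) = a) :
    (glueFun h τ₁ τ₂ i : ℕ) = n - 1 := by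
  simp [glueFun, h1]

theorem glueFun_right {a m n : ℕ} (h : a + 1 + m = n) (τ₁ : Equiv.Perm (Fin a))
    (τ₂ : Equiv.Perm (Fin m)) (i : Fin n) (h1 : a < (i : ℕ)) :
    (glueFun h τ₁ τ₂ i : ℕ) = (τ₂ ⟨(i : ℕ) - a - 1, by have := i.isLt; omega⟩ : ℕ) := by
  have h2 : ¬ (i : ℕ) < a := by omega
  have h3 : ¬ (i : ℕ) = a := by omega
  simp [glueFun, h2, h3]

theorem glueFun_injective {a m n : ℕ} (h : a + 1 + m = n) (τ₁ : Equiv.Perm (Fin a))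
    (τ₂ : Equiv.Perm (Fin m)) : Function.Injective (glueFun h τ₁ τ₂) := by
  intro i j hij
  have hv : (glueFun h τ₁ τ₂ i : ℕ) = glueFun h τ₁ τ₂ j := by rw [hij]
  have hL := fun (i : Fin n) (h1 : (i : ℕ) < a) => (τ₁ ⟨i, h1⟩).isLt
  have hR := fun (i : Fin n) (h1 : a < (i : ℕ)) =>
    (τ₂ ⟨(i : ℕ) - a - 1, by have := i.isLt; omega⟩).isLt
  apply Fin.ext
  rcases lt_trichotomy (i : ℕ) a with hi | hi | hi <;>
  rcases lt_trichotomy (j : ℕ) a with hj | hj | hj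
  · rw [glueFun_left h _ _ i hi, glueFun_left h _ _ j hj] at hv
    have := τ₁.injective (Fin.ext (Nat.add_left_cancel hv))
    simpa using this
  · rw [glueFun_left h _ _ i hi, glueFun_mid h _ _ j hj] at hv
    have := hL i hi; omega
  · rw [glueFun_left h _ _ i hi, glueFun_right h _ _ j hj] at hv
    have := hR j hj; omega
  · rw [glueFun_mid h _ _ i hi, glueFun_left h _ _ j hj] at hv
    have := hL j hj; omega
  · omega
  · rw [glueFun_mid h _ _ i hi, glueFun_right h _ _ j hj] at hv
    have := hR j hj; omega
  · rw [glueFun_right h _ _ i hi, glueFun_left h _ _ j hj] at hv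
    have := hR i hi; omega
  · rw [glueFun_right h _ _ i hi, glueFun_mid h _ _ j hj] at hv
    have := hR i hi; omega
  · rw [glueFun_right h _ _ i hi, glueFun_right h _ _ j hj] at hv
    have := τ₂.injective (Fin.ext hv)
    simp at this
    omega

/-- Gluing of two permutations around the maximum. -/
noncomputable def glue {a m n : ℕ} (h : a + 1 + m = n) (τ₁ : Equiv.Perm (Fin a))
    (τ₂ : Equiv.Perm (Fin m)) : Equiv.Perm (Fin n) :=
  Equiv.ofBijective _ (Finite.injective_iff_bijective.mp (glueFun_injective h τ₁ τ₂))

theorem glue_left {a m n : ℕ} (h : a + 1 + m = n) (τ₁ : Equiv.Perm (Fin a))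
    (τ₂ : Equiv.Perm (Fin m)) (i : Fin n) (h1 : (i : ℕ) < a) :
    (glue h τ₁ τ₂ i : ℕ) = m + (τ₁ ⟨i, h1⟩ : ℕ) := glueFun_left h τ₁ τ₂ i h1

theorem glue_mid {a m n : ℕ} (h : a + 1 + m = n) (τ₁ : Equiv.Perm (Fin a))
    (τ₂ : Equiv.Perm (Fin m)) (i : Fin n) (h1 : (i : ℕ) = a) :
    (glue h τ₁ τ₂ i : ℕ) = n - 1 := glueFun_mid h τ₁ τ₂ i h1

theorem glue_right {a m n : ℕ} (h : a + 1 + m = n) (τ₁ : Equiv.Perm (Fin a))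
    (τ₂ : Equiv.Perm (Fin m)) (i : Fin n) (h1 : a < (i : ℕ)) :
    (glue h τ₁ τ₂ i : ℕ) = (τ₂ ⟨(i : ℕ) - a - 1, by have := i.isLt; omega⟩ : ℕ) :=
  glueFun_right h τ₁ τ₂ i h1

theorem glue_avoids {a m n : ℕ} (h : a + 1 + m = n) (τ₁ : Equiv.Perm (Fin a))
    (τ₂ : Equiv.Perm (Fin m)) (h1 : Avoids132 τ₁) (h2 : Avoids132 τ₂) :
    Avoids132 (glue h τ₁ τ₂) := by
  rintro ⟨i, j, k, hij, hjk, hik, hkj⟩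
  rw [Fin.lt_def] at hij hjk hik hkj
  have hL := fun (i : Fin n) (h1 : (i : ℕ) < a) => (τ₁ ⟨i, h1⟩).isLt
  have hR := fun (i : Fin n) (h1 : a < (i : ℕ)) =>
    (τ₂ ⟨(i : ℕ) - a - 1, by have := i.isLt; omega⟩).isLt
  rcases lt_trichotomy (k : ℕ) a with hk | hk | hk
  · have hj : (j : ℕ) < a := by omega
    have hi : (i : ℕ) < a := by omega
    rw [glue_left h _ _ k hk, glue_left h _ _ j hj] at hkj
    rw [glue_left h _ _ k hk, glue_left h _ _ i hi] at hik
    exact h1 ⟨⟨i, hi⟩, ⟨j, hj⟩, ⟨k, hk⟩, hij, hjk, Nat.lt_of_add_lt_add_left hik,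
      Nat.lt_of_add_lt_add_left hkj⟩
  · rw [glue_mid h _ _ k hk] at hkj
    have := (glue h τ₁ τ₂ j).isLt
    omega
  · rw [glue_right h _ _ k hk] at hkj hik
    have hkR := hR k hk
    rcases lt_trichotomy (i : ℕ) a with hi | hi | hi
    · rw [glue_left h _ _ i hi] at hik
      omega
    · rw [glue_mid h _ _ i hi] at hik
      omega
    · have hj : a < (j : ℕ) := by omega
      rw [glue_right h _ _ i hi] at hik
      rw [glue_right h _ _ j hj] at hkj
      refine h2 ⟨_, _, _, ?_, ?_, hik, hkj⟩ <;> rw [Fin.lt_def] <;> simp only <;> omega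

theorem exists_glue {a m n : ℕ} (h : a + 1 + m = n) (p : Fin n) (hp : (p : ℕ) = a)
    (σ : Equiv.Perm (Fin n)) (hσ : Avoids132 σ) (hσp : (σ p : ℕ) = n - 1) :
    ∃ τ₁ : Equiv.Perm (Fin a), ∃ τ₂ : Equiv.Perm (Fin m),
      Avoids132 τ₁ ∧ Avoids132 τ₂ ∧ glue h τ₁ τ₂ = σ := by
  have hlt : ∀ i : Fin n, (i : ℕ) ≠ a → (σ i : ℕ) < n - 1 := by
    intro i hi
    have h1 := (σ i).isLt
    have h2 : (σ i : ℕ) ≠ n - 1 := by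
      intro h3
      have := σ.injective (Fin.ext (h3.trans hσp.symm))
      rw [this] at hi
      exact hi hp
    omega
  have key : ∀ i k : Fin n, (i : ℕ) < a → a < (k : ℕ) → σ k < σ i := by
    intro i k hi hk
    by_contra hc
    have hne : σ i ≠ σ k := by
      intro h3
      have := congrArg Fin.val (σ.injective h3)
      omega
    have h4 : σ i < σ k := lt_of_le_of_ne (not_lt.mp hc) hne
    refine hσ ⟨i, p, k, ?_, ?_, h4, ?_⟩
    · rw [Fin.lt_def]; omega
    · rw [Fin.lt_def]; omega
    · rw [Fin.lt_def, hσp]; exact hlt k (by omega)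
  have hposcard : (Finset.univ.filter (fun x : Fin n => a < (x : ℕ))).card = m := by
    have : (Finset.univ.filter (fun x : Fin n => a < (x : ℕ))) = Finset.Ioi p := by
      ext x; simp [Fin.lt_def, hp]
    rw [this, Fin.card_Ioi]; omega
  have hhi : ∀ k : Fin n, a < (k : ℕ) → (σ k : ℕ) < m := by
    intro k hk
    have hsub : (Finset.Iic (σ k)).map σ.symm.toEmbedding ⊆
        Finset.univ.filter (fun x : Fin n => a < (x : ℕ)) := by
      intro x hx
      simp only [Finset.mem_map_equiv, Equiv.symm_symm, Finset.mem_Iic] at hx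
      simp only [Finset.mem_filter, Finset.mem_univ, true_and]
      by_contra hc
      rcases lt_or_eq_of_le (not_lt.mp hc) with hx2 | hx2
      · exact absurd (key x k hx2 hk) (not_lt.mpr hx)
      · have : x = p := Fin.ext (by omega)
        rw [this, Fin.le_def, hσp] at hx
        have := hlt k (by omega)
        omega
    have := Finset.card_le_card hsub
    rw [Finset.card_map, hposcard, Fin.card_Iic] at this
    omega
  have hlo : ∀ i : Fin n, (i : ℕ) < a → m ≤ (σ i : ℕ) := by
    intro i hi
    have hsub : (Finset.univ.filter (fun x : Fin n => a < (x : ℕ))).map σ.toEmbedding ⊆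
        Finset.Iio (σ i) := by
      intro y hy
      simp only [Finset.mem_map, Finset.mem_filter, Finset.mem_univ, true_and] at hy
      obtain ⟨x, hx, rfl⟩ := hy
      exact Finset.mem_Iio.mpr (key i x hi hx)
    have := Finset.card_le_card hsub
    rwa [Finset.card_map, hposcard, Fin.card_Iio] at this
  let f₁ : Fin a → Fin a := fun i => ⟨(σ ⟨i, by have := i.isLt; omega⟩ : ℕ) - m, by
    have h1 := i.isLt
    have h2 := hlt ⟨i, by omega⟩ (by simp only; omega)
    have h3 := hlo ⟨i, by omega⟩ h1
    omega⟩
  let f₂ : Fin m → Fin m := fun i => ⟨(σ ⟨a + 1 + (i : ℕ), by have := i.isLt; omega⟩ : ℕ),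
    hhi _ (by simp only; omega)⟩
  have hf₁ : ∀ i : Fin a, m + (f₁ i : ℕ) = (σ ⟨i, by have := i.isLt; omega⟩ : ℕ) := by
    intro i
    have h3 := hlo ⟨i, by have := i.isLt; omega⟩ i.isLt
    simp only [f₁]; omega
  have inj₁ : Function.Injective f₁ := by
    intro i j hij
    have h1 := hf₁ i
    rw [hij, hf₁ j] at h1
    have := congrArg Fin.val (σ.injective (Fin.ext h1))
    exact Fin.ext this.symm
  have inj₂ : Function.Injective f₂ := by
    intro i j hij
    have h1 := congrArg Fin.val hij
    have := congrArg Fin.val (σ.injective (Fin.ext h1))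
    simp only at this
    exact Fin.ext (by omega)
  refine ⟨Equiv.ofBijective f₁ (Finite.injective_iff_bijective.mp inj₁),
    Equiv.ofBijective f₂ (Finite.injective_iff_bijective.mp inj₂), ?_, ?_, ?_⟩
  · rintro ⟨i, j, k, hij, hjk, hik, hkj⟩
    simp only [Equiv.ofBijective_apply, Fin.lt_def] at hik hkj
    refine hσ ⟨⟨i, by omega⟩, ⟨j, by omega⟩, ⟨k, by omega⟩, hij, hjk, ?_, ?_⟩
    · rw [Fin.lt_def, ← hf₁ i, ← hf₁ k]; omega
    · rw [Fin.lt_def, ← hf₁ j, ← hf₁ k]; omega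
  · rintro ⟨i, j, k, hij, hjk, hik, hkj⟩
    rw [Fin.lt_def] at hij hjk
    refine hσ ⟨_, _, _, ?_, ?_, hik, hkj⟩ <;> rw [Fin.lt_def] <;> simp only <;> omega
  · apply Equiv.ext
    intro i
    apply Fin.ext
    rcases lt_trichotomy (i : ℕ) a with hi | hi | hi
    · rw [glue_left h _ _ i hi, Equiv.ofBijective_apply, hf₁]
    · rw [glue_mid h _ _ i hi, ← hσp]
      congr 2
      exact Fin.ext (by omega)
    · rw [glue_right h _ _ i hi, Equiv.ofBijective_apply]
      simp only [f₂]
      congr 2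
      exact Fin.ext (by simp only; omega)

theorem glue_inj {a m n : ℕ} (h : a + 1 + m = n) (τ₁ τ₁' : Equiv.Perm (Fin a))
    (τ₂ τ₂' : Equiv.Perm (Fin m)) (he : glue h τ₁ τ₂ = glue h τ₁' τ₂') :
    τ₁ = τ₁' ∧ τ₂ = τ₂' := by
  constructor
  · apply Equiv.ext
    intro i
    have h1 := glue_left h τ₁ τ₂ ⟨i, by have := i.isLt; omega⟩ i.isLt
    have h2 := glue_left h τ₁' τ₂' ⟨i, by have := i.isLt; omega⟩ i.isLt
    rw [he, h2] at h1
    exact Fin.ext (Nat.add_left_cancel h1).symm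
  · apply Equiv.ext
    intro i
    have hlt : a < a + 1 + (i : ℕ) := by omega
    have h1 := glue_right h τ₁ τ₂ ⟨a + 1 + (i : ℕ), by have := i.isLt; omega⟩ hlt
    have h2 := glue_right h τ₁' τ₂' ⟨a + 1 + (i : ℕ), by have := i.isLt; omega⟩ hlt
    rw [he, h2] at h1
    have h3 : (⟨a + 1 + (i : ℕ) - a - 1, by have := i.isLt; omega⟩ : Fin m) = i :=
      Fin.ext (by simp only; omega)
    simp only [h3] at h1
    exact Fin.ext h1.symm

theorem card_fiber {a m n : ℕ} (h : a + 1 + m = n) (p : Fin n) (hp : (p : ℕ) = a) :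
    Nat.card {σ : Equiv.Perm (Fin n) // Avoids132 σ ∧ (σ p : ℕ) = n - 1} =
      Nat.card {τ : Equiv.Perm (Fin a) // Avoids132 τ} *
      Nat.card {τ : Equiv.Perm (Fin m) // Avoids132 τ} := by
  rw [← Nat.card_prod]
  symm
  refine Nat.card_eq_of_bijective (fun x => ⟨glue h x.1.1 x.2.1,
    glue_avoids h _ _ x.1.2 x.2.2, glue_mid h _ _ p hp⟩) ⟨?_, ?_⟩
  · rintro ⟨⟨x, hx⟩, ⟨y, hy⟩⟩ ⟨⟨x', hx'⟩, ⟨y', hy'⟩⟩ he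
    have := glue_inj h _ _ _ _ (congrArg Subtype.val he)
    simp only at this
    obtain ⟨rfl, rfl⟩ := this
    rfl
  · rintro ⟨σ, hσ, hσp⟩
    obtain ⟨τ₁, τ₂, h1, h2, rfl⟩ := exists_glue h p hp σ hσ hσp
    exact ⟨(⟨τ₁, h1⟩, ⟨τ₂, h2⟩), rfl⟩

theorem card_avoids (n : ℕ) :
    Nat.card {σ : Equiv.Perm (Fin n) // Avoids132 σ} = catalan n := by
  induction n using Nat.strong_induction_on with
  | _ n ih =>
  cases n with
  | zero =>
    rw [catalan_zero, Nat.card_eq_one_iff_unique]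
    exact ⟨inferInstance, ⟨⟨1, fun ⟨i, _⟩ => i.elim0⟩⟩⟩
  | succ n =>
    rw [catalan_succ]
    have e : Nat.card {σ : Equiv.Perm (Fin (n + 1)) // Avoids132 σ} =
        Nat.card (Σ p : Fin (n + 1),
          {σ : Equiv.Perm (Fin (n + 1)) // Avoids132 σ ∧ (σ p : ℕ) = n + 1 - 1}) := by
      symm
      refine Nat.card_eq_of_bijective (fun x => ⟨x.2.1, x.2.2.1⟩) ⟨?_, ?_⟩
      · rintro ⟨p, σ, hσ, hp⟩ ⟨q, σ', hσ', hq⟩ he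
        have h1 : σ = σ' := congrArg Subtype.val he
        subst h1
        have h2 : p = q := σ.injective (Fin.ext (hp.trans hq.symm))
        subst h2
        rfl
      · rintro ⟨σ, hσ⟩
        exact ⟨⟨σ.symm (Fin.last n), σ, hσ, by simp⟩, rfl⟩
    rw [e, Nat.card_sigma]
    refine Finset.sum_congr rfl fun p _ => ?_
    have hpl := p.isLt
    rw [card_fiber (a := (p : ℕ)) (m := n - p) (by omega) p rfl, ih _ (by omega), ih _ (by omega)]

theorem card_lt_perm {a : ℕ} (τ : Equiv.Perm (Fin a)) (i : Fin a) :
    (Finset.univ.filter (fun k : Fin a => τ k < τ i)).card = (τ i : ℕ) := by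
  have : (Finset.univ.filter (fun k : Fin a => τ k < τ i)) =
      (Finset.Iio (τ i)).map τ.symm.toEmbedding := by
    ext x; simp
  rw [this, Finset.card_map, Fin.card_Iio]

theorem glue_rank {a m n : ℕ} (h : a + 1 + m = n) (τ₁ : Equiv.Perm (Fin a))
    (τ₂ : Equiv.Perm (Fin m)) (han : a < n) (i : Fin a) :
    (Finset.univ.filter (fun k : Fin a =>
      glue h τ₁ τ₂ ⟨k, lt_trans k.isLt han⟩ < glue h τ₁ τ₂ ⟨i, lt_trans i.isLt han⟩)).card =
      (τ₁ i : ℕ) := by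
  rw [← card_lt_perm τ₁ i]
  congr 1
  ext k
  simp only [Finset.mem_filter, Finset.mem_univ, true_and]
  rw [Fin.lt_def, glue_left h _ _ ⟨k, _⟩ k.isLt, glue_left h _ _ ⟨i, _⟩ i.isLt, Fin.lt_def]
  simp

theorem glue_tail {a m n : ℕ} (h : a + 1 + m = n) (τ₁ : Equiv.Perm (Fin a))
    (τ₂ : Equiv.Perm (Fin m)) (i : Fin m) (hi : a + 1 + (i : ℕ) < n) :
    (glue h τ₁ τ₂ ⟨a + 1 + (i : ℕ), hi⟩ : ℕ) = (τ₂ i : ℕ) := by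
  rw [glue_right h _ _ _ (by simp only; omega)]
  congr 2
  exact Fin.ext (by simp only; omega)

/-- Under the uniform measure on `S_n(132)` conditioned on the maximum being at position `p`
(0-indexed, `p+1 < n`), the pair `(red(σ₁⋯σ_{j-1}), σ_{j+1}⋯σ_n)` is distributed as a pair of
independent uniform picks from `S_{j-1}(132)` and `S_{n-j}(132)`: the conditional probability
of any pair `(τ₁, τ₂)` of 132-avoiding permutations equals `(1/C_{j-1})·(1/C_{n-j})`. -/
theorem conditional_independence_uniform (n : ℕ) (p : Fin n) (hp : (p : ℕ) + 1 < n)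
    (τ₁ : Equiv.Perm (Fin (p : ℕ))) (hτ₁ : Avoids132 τ₁)
    (τ₂ : Equiv.Perm (Fin (n - 1 - (p : ℕ)))) (hτ₂ : Avoids132 τ₂) :
    (Nat.card {σ : Equiv.Perm (Fin n) // Avoids132 σ ∧ (σ p : ℕ) = n - 1 ∧
        (∀ i : Fin (p : ℕ), ((τ₁ i : Fin (p : ℕ)) : ℕ) =
          (Finset.univ.filter (fun k : Fin (p : ℕ) =>
            σ ⟨k, lt_trans k.isLt p.isLt⟩ < σ ⟨i, lt_trans i.isLt p.isLt⟩)).card) ∧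
        (∀ i : Fin (n - 1 - (p : ℕ)), ((τ₂ i : Fin (n - 1 - (p : ℕ))) : ℕ) =
          (σ ⟨(p : ℕ) + 1 + (i : ℕ), by have := i.isLt; omega⟩ : ℕ))} : ℚ) /
      (Nat.card {σ : Equiv.Perm (Fin n) // Avoids132 σ ∧ (σ p : ℕ) = n - 1} : ℚ) =
      (1 / (catalan (p : ℕ) : ℚ)) * (1 / (catalan (n - 1 - (p : ℕ)) : ℚ)) := by
  have h : (p : ℕ) + 1 + (n - 1 - (p : ℕ)) = n := by omega
  rw [card_fiber h p rfl, card_avoids, card_avoids]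
  have hone : Nat.card {σ : Equiv.Perm (Fin n) // Avoids132 σ ∧ (σ p : ℕ) = n - 1 ∧
        (∀ i : Fin (p : ℕ), ((τ₁ i : Fin (p : ℕ)) : ℕ) =
          (Finset.univ.filter (fun k : Fin (p : ℕ) =>
            σ ⟨k, lt_trans k.isLt p.isLt⟩ < σ ⟨i, lt_trans i.isLt p.isLt⟩)).card) ∧
        (∀ i : Fin (n - 1 - (p : ℕ)), ((τ₂ i : Fin (n - 1 - (p : ℕ))) : ℕ) =
          (σ ⟨(p : ℕ) + 1 + (i : ℕ), by have := i.isLt; omega⟩ : ℕ))} = 1 := by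
    rw [Nat.card_eq_one_iff_exists]
    refine ⟨⟨glue h τ₁ τ₂, glue_avoids h _ _ hτ₁ hτ₂, glue_mid h _ _ p rfl,
      fun i => (glue_rank h τ₁ τ₂ p.isLt i).symm, fun i => (glue_tail h τ₁ τ₂ i _).symm⟩, ?_⟩
    rintro ⟨σ, hσ, hσp, hr, ht⟩
    obtain ⟨τ₁', τ₂', h1, h2, rfl⟩ := exists_glue h p rfl σ hσ hσp
    have e1 : τ₁ = τ₁' := Equiv.ext fun i => Fin.ext ((hr i).trans (glue_rank h τ₁' τ₂' p.isLt i))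
    have e2 : τ₂ = τ₂' := Equiv.ext fun i => Fin.ext ((ht i).trans (glue_tail h τ₁' τ₂' i _))
    subst e1 e2
    rfl
  rw [hone]
  push_cast
  rw [one_div_mul_one_div]
end

section
/- Let L denote the length of the longest subsequence repeating the pattern UUD (i.e., whose consecutive differences follow the pattern up, up, down, up, up, down, ..., ending with a complete UUD block after the initial element). Then the expected value of L over uniformly random 132-avoiding permutations of [n] is asymptotic to (3/7)·n as n → ∞. -/
/-- `σ` has a subsequence of length `3k+1` whose up/down word is `(UUD)^k`. -/
def HasRepUUD {n : ℕ} (σ : Equiv.Perm (Fin n)) (k : ℕ) : Prop :=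
  ∃ f : ℕ → Fin n, (∀ a b : ℕ, a < b → b ≤ 3 * k → f a < f b) ∧
    ∀ i < 3 * k, if i % 3 = 2 then σ (f (i + 1)) < σ (f i) else σ (f i) < σ (f (i + 1))

/-- The length of the longest subsequence of `σ` repeating the pattern `UUD`:
it is `3k+1` for the largest `k ≥ 1` achievable, and `0` if no complete `UUD` occurs. -/
noncomputable def LUUD {n : ℕ} (σ : Equiv.Perm (Fin n)) : ℕ :=
  sSup {m : ℕ | ∃ k : ℕ, 1 ≤ k ∧ m = 3 * k + 1 ∧ HasRepUUD σ k}

/-! ### Binary trees and the greedy statistic -/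

abbrev BT := BinaryTree Unit

/-- Effect on the longest alternating length of appending a new maximum. -/
def appMax (N : ℕ) : ℕ := if N % 3 = 0 ∧ N ≠ 0 then N else N + 1

/-- Longest length of a subsequence following `UUDUUD...` in the permutation of a tree. -/
def LN : BT → ℕ
  | .nil => 0
  | .node _ L R => max (appMax (LN L)) (3 * (appMax (LN L) / 3) + LN R)

/-- Sum of `f` over trees with `n` nodes. -/
noncomputable def TS (f : BT → ℝ) (n : ℕ) : ℝ := ∑ T ∈ BinaryTree.treesOfNumNodesEq n, f T

open Finset in
lemma TS_succ (f : BT → ℝ) (n : ℕ) :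
    TS f (n + 1) = ∑ ij ∈ antidiagonal n, ∑ L ∈ BinaryTree.treesOfNumNodesEq ij.1,
      ∑ R ∈ BinaryTree.treesOfNumNodesEq ij.2, f (.node () L R) := by
  unfold TS
  rw [BinaryTree.treesOfNumNodesEq_succ, sum_biUnion]
  · apply sum_congr rfl
    intro ij _
    rw [sum_map, sum_product]
    rfl
  · simp_rw [Set.PairwiseDisjoint, Set.Pairwise, disjoint_left]
    aesop

noncomputable def GF (f : BT → ℝ) : PowerSeries ℝ := PowerSeries.mk (TS f)

lemma GF_node (f u₁ v₁ u₂ v₂ u₃ v₃ : BT → ℝ)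
    (h : ∀ L R, f (.node () L R) = u₁ L * v₁ R + u₂ L * v₂ R + u₃ L * v₃ R) :
    GF f = PowerSeries.C (f .nil) +
      PowerSeries.X * (GF u₁ * GF v₁ + GF u₂ * GF v₂ + GF u₃ * GF v₃) := by
  ext n
  cases n with
  | zero => simp [GF, TS]
  | succ n =>
    rw [map_add, PowerSeries.coeff_succ_X_mul, PowerSeries.coeff_C]
    simp only [map_add, PowerSeries.coeff_mul, GF, PowerSeries.coeff_mk, TS_succ, h]
    simp only [Finset.sum_add_distrib, TS, Finset.sum_mul_sum]
    simp

lemma GF_add (f g : BT → ℝ) : GF (fun T => f T + g T) = GF f + GF g := by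
  ext n; simp [GF, TS, Finset.sum_add_distrib]

lemma GF_zero : GF (fun _ => 0) = 0 := by
  ext n; simp [GF, TS]

lemma TS_one (n : ℕ) : TS (fun _ => 1) n = catalan n := by
  simp [TS, BinaryTree.treesOfNumNodesEq_card_eq_catalan]

lemma GF_one : GF (fun _ => 1) = 1 + PowerSeries.X * (GF (fun _ => 1) * GF (fun _ => 1)) := by
  have := GF_node (fun _ => 1) (fun _ => 1) (fun _ => 1) (fun _ => 0) (fun _ => 0)
    (fun _ => 0) (fun _ => 0) (by intros; simp)
  simpa [GF_zero] using this

lemma GF_one_sub_ne : (1 - 2 * PowerSeries.X * GF (fun _ => 1) : PowerSeries ℝ) ≠ 0 := by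
  intro h
  have := congrArg (PowerSeries.constantCoeff) h
  simp at this

/-- Additive functional identity. -/
lemma GF_additive (A p : BT → ℝ) (h0 : A .nil = 0)
    (h : ∀ L R, A (.node () L R) = A L + A R + p L) :
    2 * GF A = GF p * (GF (fun T => (T.numNodes : ℝ) + 1) - 1) := by
  have h1 := GF_node A A (fun _ => 1) (fun _ => 1) A p (fun _ => 1) (by intros; simp [h])
  have h2 := GF_node (fun T => (T.numNodes : ℝ)) (fun T => (T.numNodes : ℝ)) (fun _ => 1) (fun _ => 1)
    (fun T => (T.numNodes : ℝ)) (fun _ => 1) (fun _ => 1) (by intros; simp)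
  have h3 := GF_one
  have h4 := GF_add (fun T => (T.numNodes : ℝ)) (fun _ => 1)
  rw [h4]
  simp only [h0, map_zero, BinaryTree.numNodes, Nat.cast_zero] at h1 h2
  generalize GF (fun _ => 1) = c at *
  have hne : (1 - 2 * PowerSeries.X * c : PowerSeries ℝ) ≠ 0 := by
    intro h
    have := congrArg (PowerSeries.constantCoeff) h
    simp at this
  generalize GF A = a at *
  generalize GF p = g at *
  generalize GF (fun T => (T.numNodes : ℝ)) = m at *
  apply mul_right_cancel₀ hne
  linear_combination 2 * h1 - g * h2 - g * h3

lemma TS_additive (A p : BT → ℝ) (h0 : A .nil = 0)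
    (h : ∀ L R, A (.node () L R) = A L + A R + p L) (n : ℕ) :
    2 * TS A n = ∑ k ∈ Finset.range n, TS p k * (n - k).centralBinom := by
  have := congrArg (PowerSeries.coeff n) (GF_additive A p h0 h)
  have e : (PowerSeries.coeff n) (2 * GF A) = 2 * TS A n := by
    rw [two_mul, map_add, two_mul]; simp [GF]
  rw [e, PowerSeries.coeff_mul, Finset.Nat.sum_antidiagonal_eq_sum_range_succ_mk,
    Finset.sum_range_succ] at this
  rw [this]
  have e2 : ∀ m, TS (fun T => (T.numNodes : ℝ) + 1) m = m.centralBinom := by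
    intro m
    rw [← succ_mul_catalan_eq_centralBinom]
    unfold TS
    rw [Finset.sum_congr rfl (g := fun _ => (m : ℝ) + 1)]
    · simp [BinaryTree.treesOfNumNodesEq_card_eq_catalan]
      ring
    · intro T hT
      rw [BinaryTree.mem_treesOfNumNodesEq] at hT
      simp only [hT]
  simp only [GF, map_sub, PowerSeries.coeff_mk, e2, PowerSeries.coeff_one]
  simp only [Nat.sub_self, Nat.centralBinom_zero]
  simp only [Nat.cast_one, if_true, sub_self, mul_zero, add_zero]
  apply Finset.sum_congr rfl
  intro k hk
  rw [Finset.mem_range] at hk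
  rw [if_neg (by omega)]; simp

/-! ### Evaluating at 1/4 -/

lemma sum_catalan_quarter (n : ℕ) :
    ∑ k ∈ Finset.range n, (catalan k : ℝ) * (1 / 4) ^ k = 2 - 2 * n.centralBinom * (1 / 4) ^ n := by
  induction n with
  | zero => simp
  | succ n ih =>
    rw [Finset.sum_range_succ, ih]
    have h1 : ((n : ℝ) + 1) * catalan n = n.centralBinom := by
      exact_mod_cast succ_mul_catalan_eq_centralBinom n
    have h2 : ((n : ℝ) + 1) * (n + 1).centralBinom = 2 * (2 * n + 1) * n.centralBinom := by
      exact_mod_cast Nat.succ_mul_centralBinom_succ n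
    have h3 : ((n : ℝ) + 1) ≠ 0 := by positivity
    apply mul_left_cancel₀ h3
    rw [pow_succ]
    linear_combination (1 / 4 : ℝ) ^ n * h1 + (1 / 2) * (1 / 4 : ℝ) ^ n * h2

lemma summable_catalan : Summable (fun k => (catalan k : ℝ) * (1 / 4) ^ k) := by
  apply summable_of_sum_range_le (c := 2)
  · intro; positivity
  · intro n
    rw [sum_catalan_quarter]
    have : (0 : ℝ) ≤ 2 * n.centralBinom * (1 / 4) ^ n := by positivity
    linarith

def Sm (P : PowerSeries ℝ) : Prop := Summable (fun n => ‖PowerSeries.coeff n P * (1 / 4 : ℝ) ^ n‖)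
noncomputable def Ev (P : PowerSeries ℝ) : ℝ := ∑' n, PowerSeries.coeff n P * (1 / 4 : ℝ) ^ n

lemma Sm.add {P Q : PowerSeries ℝ} (hP : Sm P) (hQ : Sm Q) : Sm (P + Q) := by
  unfold Sm at *
  have := (hP.of_norm.add hQ.of_norm).norm
  simpa [add_mul] using this

lemma Ev_add {P Q : PowerSeries ℝ} (hP : Sm P) (hQ : Sm Q) : Ev (P + Q) = Ev P + Ev Q := by
  unfold Sm Ev at *
  rw [← hP.of_norm.tsum_add hQ.of_norm]
  simp [add_mul]

lemma mul_aux (P Q : PowerSeries ℝ) (n : ℕ) : PowerSeries.coeff n (P * Q) * (1 / 4 : ℝ) ^ n =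
    ∑ kl ∈ Finset.HasAntidiagonal.antidiagonal n, (PowerSeries.coeff kl.1 P * (1 / 4 : ℝ) ^ kl.1) *
      (PowerSeries.coeff kl.2 Q * (1 / 4 : ℝ) ^ kl.2) := by
  rw [PowerSeries.coeff_mul, Finset.sum_mul]
  apply Finset.sum_congr rfl
  intro kl h
  rw [Finset.HasAntidiagonal.mem_antidiagonal] at h
  rw [← h, pow_add]; ring

lemma Sm.mul {P Q : PowerSeries ℝ} (hP : Sm P) (hQ : Sm Q) : Sm (P * Q) := by
  have := summable_norm_sum_mul_antidiagonal_of_summable_norm hP hQ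
  unfold Sm
  simpa only [mul_aux] using this

lemma Ev_mul {P Q : PowerSeries ℝ} (hP : Sm P) (hQ : Sm Q) : Ev (P * Q) = Ev P * Ev Q := by
  have := tsum_mul_tsum_eq_tsum_sum_antidiagonal_of_summable_norm hP hQ
  unfold Ev
  rw [this]
  simp only [mul_aux]

lemma Sm_C (c : ℝ) : Sm (PowerSeries.C c) := by
  apply summable_of_ne_finset_zero (s := {0})
  intro b hb
  simp at hb
  simp [PowerSeries.coeff_C, hb]

lemma Ev_C (c : ℝ) : Ev (PowerSeries.C c) = c := by
  unfold Ev
  rw [tsum_eq_single 0]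
  · simp
  · intro b hb; simp [PowerSeries.coeff_C, hb]

lemma Sm_X : Sm PowerSeries.X := by
  apply summable_of_ne_finset_zero (s := {1})
  intro b hb
  simp at hb
  simp [PowerSeries.coeff_X, hb]

lemma Ev_X : Ev PowerSeries.X = 1 / 4 := by
  unfold Ev
  rw [tsum_eq_single 1]
  · simp
  · intro b hb; simp [PowerSeries.coeff_X, hb]

lemma TS_bounds (f : BT → ℝ) (h : ∀ T, 0 ≤ f T ∧ f T ≤ 1) (n : ℕ) :
    0 ≤ TS f n ∧ TS f n ≤ catalan n := by
  constructor
  · exact Finset.sum_nonneg fun T _ => (h T).1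
  · rw [← TS_one]
    exact Finset.sum_le_sum fun T _ => (h T).2

lemma Sm_GF (f : BT → ℝ) (h : ∀ T, 0 ≤ f T ∧ f T ≤ 1) : Sm (GF f) := by
  apply Summable.of_nonneg_of_le _ _ summable_catalan
  · intro; positivity
  · intro n
    have := TS_bounds f h n
    rw [norm_mul, Real.norm_of_nonneg (by simpa [GF] using this.1), Real.norm_of_nonneg (by positivity)]
    simp only [GF, PowerSeries.coeff_mk]
    exact mul_le_mul_of_nonneg_right this.2 (by positivity)

lemma Ev_node (f u₁ v₁ u₂ v₂ u₃ v₃ : BT → ℝ)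
    (h : ∀ L R, f (.node () L R) = u₁ L * v₁ R + u₂ L * v₂ R + u₃ L * v₃ R)
    (a1 : Sm (GF u₁)) (a2 : Sm (GF v₁)) (a3 : Sm (GF u₂)) (a4 : Sm (GF v₂))
    (a5 : Sm (GF u₃)) (a6 : Sm (GF v₃)) :
    Ev (GF f) = f .nil +
      1 / 4 * (Ev (GF u₁) * Ev (GF v₁) + Ev (GF u₂) * Ev (GF v₂) + Ev (GF u₃) * Ev (GF v₃)) := by
  rw [GF_node f u₁ v₁ u₂ v₂ u₃ v₃ h]
  have b1 := a1.mul a2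
  have b2 := a3.mul a4
  have b3 := a5.mul a6
  rw [Ev_add (Sm_C _) (Sm_X.mul ((b1.add b2).add b3)), Ev_mul Sm_X ((b1.add b2).add b3),
    Ev_add (b1.add b2) b3, Ev_add b1 b2, Ev_mul a1 a2, Ev_mul a3 a4, Ev_mul a5 a6, Ev_C, Ev_X]

lemma Ev_GF_add (f g : BT → ℝ) (hf : Sm (GF f)) (hg : Sm (GF g)) :
    Ev (GF (fun T => f T + g T)) = Ev (GF f) + Ev (GF g) := by
  rw [GF_add, Ev_add hf hg]

lemma Ev_one : Ev (GF fun _ => 1) = 2 := by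
  have h1 : Sm (GF fun _ => 1) := Sm_GF _ (by intros; norm_num)
  have h := GF_one
  have h' : Ev (GF fun _ => 1) = 1 + 1 / 4 * (Ev (GF fun _ => 1) * Ev (GF fun _ => 1)) := by
    conv_lhs => rw [h]
    rw [← map_one (PowerSeries.C (R := ℝ)), Ev_add (Sm_C _) (Sm_X.mul (h1.mul h1)), Ev_mul Sm_X (h1.mul h1), Ev_mul h1 h1, Ev_C, Ev_X]
  nlinarith [sq_nonneg (Ev (GF fun _ => 1) - 2)]

/-- Indicator. -/
noncomputable def ind (P : ℕ → Prop) [DecidablePred P] (T : BT) : ℝ := if P (LN T) then 1 else 0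

lemma Sm_ind (P : ℕ → Prop) [DecidablePred P] : Sm (GF (ind P)) := by
  apply Sm_GF
  intro T; unfold ind; split_ifs <;> norm_num

lemma Ev_ind_or (P Q R : ℕ → Prop) [DecidablePred P] [DecidablePred Q] [DecidablePred R]
    (h : ∀ n, R n ↔ (P n ∨ Q n)) (h' : ∀ n, ¬ (P n ∧ Q n)) :
    Ev (GF (ind R)) = Ev (GF (ind P)) + Ev (GF (ind Q)) := by
  rw [← Ev_GF_add _ _ (Sm_ind _) (Sm_ind _)]
  congr 2
  ext T
  have := h (LN T)
  have := h' (LN T)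
  unfold ind
  by_cases P (LN T) <;> by_cases Q (LN T) <;> simp_all

lemma Ev_ind_node (P U₁ V₁ U₂ V₂ U₃ V₃ : ℕ → Prop) [DecidablePred P] [DecidablePred U₁]
    [DecidablePred V₁] [DecidablePred U₂] [DecidablePred V₂] [DecidablePred U₃] [DecidablePred V₃]
    (h : ∀ l r, P (max (appMax l) (3 * (appMax l / 3) + r)) ↔
      ((U₁ l ∧ V₁ r) ∨ (U₂ l ∧ V₂ r) ∨ (U₃ l ∧ V₃ r)))
    (d1 : ∀ l r, ¬ ((U₁ l ∧ V₁ r) ∧ (U₂ l ∧ V₂ r)))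
    (d2 : ∀ l r, ¬ ((U₁ l ∧ V₁ r) ∧ (U₃ l ∧ V₃ r)))
    (d3 : ∀ l r, ¬ ((U₂ l ∧ V₂ r) ∧ (U₃ l ∧ V₃ r))) :
    Ev (GF (ind P)) = (if P 0 then 1 else 0) +
      1 / 4 * (Ev (GF (ind U₁)) * Ev (GF (ind V₁)) + Ev (GF (ind U₂)) * Ev (GF (ind V₂)) +
        Ev (GF (ind U₃)) * Ev (GF (ind V₃))) := by
  rw [Ev_node (ind P) (ind U₁) (ind V₁) (ind U₂) (ind V₂) (ind U₃) (ind V₃) _ (Sm_ind _)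
    (Sm_ind _) (Sm_ind _) (Sm_ind _) (Sm_ind _) (Sm_ind _)]
  · rfl
  · intro L R
    have h := h (LN L) (LN R)
    have d1 := d1 (LN L) (LN R)
    have d2 := d2 (LN L) (LN R)
    have d3 := d3 (LN L) (LN R)
    have hLN : LN (.node () L R) = max (appMax (LN L)) (3 * (appMax (LN L) / 3) + LN R) := rfl
    rw [← hLN] at h
    simp only [ind]
    rw [if_congr h rfl rfl]
    clear h
    by_cases U₁ (LN L) <;> by_cases V₁ (LN R) <;> by_cases U₂ (LN L) <;> by_cases V₂ (LN R) <;>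
      by_cases U₃ (LN L) <;> by_cases V₃ (LN R) <;> simp_all

lemma Ev_false : Ev (GF (ind fun _ => False)) = 0 := by
  have : (ind fun _ => False) = fun _ => 0 := by ext; simp [ind]
  rw [this, GF_zero]; simp [Ev]

lemma Ev_true : Ev (GF (ind fun _ => True)) = 2 := by
  have : (ind fun _ => True) = fun _ => 1 := by ext; simp [ind]
  rw [this, Ev_one]

lemma Ev_G2 : Ev (GF (ind fun n => n % 3 = 2)) = 2 / 7 := by
  have e0 := Ev_ind_node (fun n => n = 0) (fun _ => False) (fun _ => False) (fun _ => False)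
    (fun _ => False) (fun _ => False) (fun _ => False)
    (by intro l r; unfold appMax; split_ifs <;> simp <;> omega) (by simp) (by simp) (by simp)
  have e1 := Ev_ind_node (fun n => n = 1) (fun n => n = 0) (fun n => n ≤ 1) (fun _ => False)
    (fun _ => False) (fun _ => False) (fun _ => False)
    (by intro l r; unfold appMax; split_ifs <;> simp <;> omega) (by simp) (by simp) (by simp)
  have e2 := Ev_ind_node (fun n => n = 2) (fun n => n = 1) (fun n => n ≤ 2) (fun n => n = 0)
    (fun n => n = 2) (fun _ => False) (fun _ => False)
    (by intro l r; unfold appMax; split_ifs <;> simp <;> omega)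
    (by intros; omega) (by simp) (by simp)
  have e3 := Ev_ind_node (fun n => 3 ≤ n ∧ n % 3 = 1) (fun _ => True) (fun n => 3 ≤ n ∧ n % 3 = 1)
    (fun n => 2 ≤ n ∧ n % 3 ≠ 1) (fun n => n = 1) (fun _ => False) (fun _ => False)
    (by intro l r; unfold appMax; split_ifs <;> simp <;> omega)
    (by intros; omega) (by simp) (by simp)
  have e4 := Ev_ind_node (fun n => 3 ≤ n ∧ n % 3 = 2) (fun _ => True) (fun n => 3 ≤ n ∧ n % 3 = 2)
    (fun n => 2 ≤ n) (fun n => n = 2) (fun n => 3 ≤ n ∧ n % 3 = 1) (fun n => n ≤ 1)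
    (by intro l r; unfold appMax; split_ifs <;> simp <;> omega)
    (by intros; omega) (by intros; omega) (by intros; omega)
  have f1 := Ev_ind_or (fun n => n = 0) (fun n => n = 1) (fun n => n ≤ 1)
    (by intros; omega) (by intros; omega)
  have f2 := Ev_ind_or (fun n => n ≤ 1) (fun n => n = 2) (fun n => n ≤ 2)
    (by intros; omega) (by intros; omega)
  have f3 := Ev_ind_or (fun n => n ≤ 1) (fun n => 2 ≤ n) (fun n => True)
    (by intro n; simp only [true_iff]; omega) (by intros; omega)
  have f4 := Ev_ind_or (fun n => 2 ≤ n ∧ n % 3 ≠ 1) (fun n => 3 ≤ n ∧ n % 3 = 1) (fun n => 2 ≤ n)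
    (by intros; omega) (by intros; omega)
  have f5 := Ev_ind_or (fun n => n = 2) (fun n => 3 ≤ n ∧ n % 3 = 2) (fun n => n % 3 = 2)
    (by intros; omega) (by intros; omega)
  simp only [Ev_false, Ev_true] at *
  norm_num at e0 e1 e2 e3 e4
  rw [e0] at e1 e2 f1
  rw [f1] at e1
  have g1 : Ev (GF (ind fun n => n = 1)) = 1 / 3 := by linarith
  rw [f2, f1, g1] at e2
  have g2 : Ev (GF (ind fun n => n = 2)) = 1 / 6 := by linarith
  rw [f1, g1] at f3
  have g3 : Ev (GF (ind fun n => 2 ≤ n)) = 2 / 3 := by linarith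
  rw [g1] at e3
  rw [g3] at f4
  rw [g3, g2, f1, g1] at e4
  rw [f5, g2]
  linarith

/-! ### Limits -/
section Limits

open Filter Topology

lemma lower_limit (g u : ℕ → ℝ) (w : ℕ → ℕ → ℝ) (hg : ∀ k, 0 ≤ g k) (hw : ∀ n k, 0 ≤ w n k)
    (hlim : ∀ k, Tendsto (fun n => w n k) atTop (𝓝 (u k)))
    (hs : Summable fun k => g k * u k) (ε : ℝ) (hε : 0 < ε) :
    ∀ᶠ n in atTop, (∑' k, g k * u k) - ε < ∑ k ∈ Finset.range n, g k * w n k := by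
  have h1 := hs.hasSum.tendsto_sum_nat
  obtain ⟨K, hK⟩ := (h1.eventually (lt_mem_nhds (show (∑' k, g k * u k) - ε / 2 < _ by linarith))).exists
  have h2 : Tendsto (fun n => ∑ k ∈ Finset.range K, g k * w n k) atTop
      (𝓝 (∑ k ∈ Finset.range K, g k * u k)) :=
    tendsto_finsetSum _ fun k _ => (hlim k).const_mul _
  filter_upwards [h2.eventually (lt_mem_nhds (show (∑ k ∈ Finset.range K, g k * u k) - ε / 2 < _ by linarith)),
    eventually_ge_atTop K] with n hn hKn
  have : ∑ k ∈ Finset.range K, g k * w n k ≤ ∑ k ∈ Finset.range n, g k * w n k :=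
    Finset.sum_le_sum_of_subset_of_nonneg (Finset.range_mono hKn)
      fun k _ _ => mul_nonneg (hg k) (hw n k)
  linarith

lemma scheffe (g c u : ℕ → ℝ) (w : ℕ → ℕ → ℝ) (hg : ∀ k, 0 ≤ g k) (hgc : ∀ k, g k ≤ c k)
    (hw : ∀ n k, 0 ≤ w n k) (hlim : ∀ k, Tendsto (fun n => w n k) atTop (𝓝 (u k)))
    (hs : Summable fun k => g k * u k) (hs' : Summable fun k => c k * u k)
    (htot : Tendsto (fun n => ∑ k ∈ Finset.range n, c k * w n k) atTop (𝓝 (∑' k, c k * u k))) :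
    Tendsto (fun n => ∑ k ∈ Finset.range n, g k * w n k) atTop (𝓝 (∑' k, g k * u k)) := by
  rw [Metric.tendsto_nhds]
  intro ε hε
  have hd : Summable fun k => (c k - g k) * u k := by
    simpa [sub_mul] using hs'.sub hs
  have hde : ∑' k, (c k - g k) * u k = ∑' k, c k * u k - ∑' k, g k * u k := by
    rw [← hs'.tsum_sub hs]; simp [sub_mul]
  have l1 := lower_limit g u w hg hw hlim hs ε hε
  have l2 := lower_limit (fun k => c k - g k) u w (fun k => by linarith [hgc k]) hw hlim hd (ε / 2) (by linarith)
  filter_upwards [l1, l2, htot.eventually (gt_mem_nhds (show _ < (∑' k, c k * u k) + ε / 2 by linarith))]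
    with n h1 h2 h3
  have : ∑ k ∈ Finset.range n, (c k - g k) * w n k =
    ∑ k ∈ Finset.range n, c k * w n k - ∑ k ∈ Finset.range n, g k * w n k := by
    rw [← Finset.sum_sub_distrib]; simp [sub_mul]
  rw [this, hde] at h2
  rw [Real.dist_eq, abs_lt]
  constructor <;> linarith

lemma cb_ratio (k : ℕ) :
    Tendsto (fun n => ((n - k).centralBinom : ℝ) / n.centralBinom) atTop (𝓝 ((1 / 4) ^ k)) := by
  induction k with
  | zero =>
    have : ∀ n : ℕ, ((n - 0).centralBinom : ℝ) / n.centralBinom = 1 := by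
      intro n
      have : (n.centralBinom : ℝ) ≠ 0 := by exact_mod_cast Nat.centralBinom_ne_zero n
      simp [this]
    simp only [this]; simp
  | succ k ih =>
    have h : Tendsto (fun m : ℕ => (m.centralBinom : ℝ) / (m + 1).centralBinom) atTop (𝓝 (1 / 4)) := by
      have : ∀ m : ℕ, (m.centralBinom : ℝ) / (m + 1).centralBinom =
          1 / 4 + (1 / 8) * (1 / ((m : ℝ) + 1 / 2)) := by
        intro m
        have h2 : ((m : ℝ) + 1) * (m + 1).centralBinom = 2 * (2 * m + 1) * m.centralBinom := by
          exact_mod_cast Nat.succ_mul_centralBinom_succ m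
        have h3 : ((m + 1).centralBinom : ℝ) ≠ 0 := by exact_mod_cast Nat.centralBinom_ne_zero _
        have h4 : ((m : ℝ) + 1 / 2) ≠ 0 := by positivity
        rw [div_eq_iff h3]
        field_simp
        linarith
      simp only [this]
      have h5 : Tendsto (fun m : ℕ => 1 / ((m : ℝ) + 1 / 2)) atTop (𝓝 0) := by
        apply Tendsto.div_atTop tendsto_const_nhds
        exact tendsto_atTop_add_const_right _ _ tendsto_natCast_atTop_atTop
      simpa only [mul_zero, add_zero] using (h5.const_mul (1 / 8 : ℝ)).const_add (1 / 4 : ℝ)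
    have h' := h.comp (tendsto_sub_atTop_nat (k + 1))
    have := h'.mul ih
    rw [pow_succ, mul_comm]
    refine this.congr' ?_
    filter_upwards [eventually_ge_atTop (k + 1)] with n hn
    have e : n - (k + 1) + 1 = n - k := by omega
    simp only [Function.comp, e]
    have h3 : ((n - k).centralBinom : ℝ) ≠ 0 := by exact_mod_cast Nat.centralBinom_ne_zero _
    field_simp

lemma A_tendsto : Tendsto (fun n : ℕ => TS (fun T => ((LN T / 3 : ℕ) : ℝ)) n / ((catalan n : ℝ) * n))
    atTop (𝓝 (1 / 7)) := by
  have hA : ∀ n, _ := TS_additive (fun T => ((LN T / 3 : ℕ) : ℝ)) (ind fun n => n % 3 = 2)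
    (by simp [LN]) (by
      intro L R
      have : LN (.node () L R) / 3 = LN L / 3 + LN R / 3 + if LN L % 3 = 2 then 1 else 0 := by
        simp only [LN, appMax]; split_ifs <;> omega
      simp only [this, ind]; push_cast; rfl)
  have hN : ∀ n, _ := TS_additive (fun T => (T.numNodes : ℝ)) (fun _ => 1) (by simp) (by simp)
  have hN' : ∀ n, TS (fun T => (T.numNodes : ℝ)) n = catalan n * n := by
    intro n
    unfold TS
    rw [Finset.sum_congr rfl (g := fun _ => (n : ℝ))]
    · simp [BinaryTree.treesOfNumNodesEq_card_eq_catalan]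
    · intro T hT
      rw [BinaryTree.mem_treesOfNumNodesEq] at hT
      simp only [hT]
  simp only [hN', TS_one] at hN
  have hcb : ∀ n : ℕ, (n.centralBinom : ℝ) = (n + 1) * catalan n := by
    intro n; exact_mod_cast (succ_mul_catalan_eq_centralBinom n).symm
  have hcpos : ∀ n, (0 : ℝ) < catalan n := by
    intro n
    have := Nat.centralBinom_pos n
    have h2 := hcb n
    have : (0 : ℝ) < n.centralBinom := by exact_mod_cast this
    rw [h2] at this
    exact pos_of_mul_pos_right this (by positivity)
  have hinv : Tendsto (fun n : ℕ => 1 / ((n : ℝ) + 1)) atTop (𝓝 0) := tendsto_one_div_add_atTop_nhds_zero_nat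
  have hinv' : Tendsto (fun n : ℕ => 1 / (n : ℝ)) atTop (𝓝 0) := tendsto_one_div_atTop_nhds_zero_nat
  have hb := TS_bounds (ind fun n => n % 3 = 2)
    (fun T => by unfold ind; split_ifs <;> norm_num)
  have hEv2 : ∑' k, TS (ind fun n => n % 3 = 2) k * (1 / 4 : ℝ) ^ k = 2 / 7 := by
    have := Ev_G2; simpa [Ev, GF] using this
  have hEv1 : ∑' k, (catalan k : ℝ) * (1 / 4 : ℝ) ^ k = 2 := by
    have := Ev_one; simpa [Ev, GF, TS_one] using this
  have key := scheffe (TS (ind fun n => n % 3 = 2)) (fun k => (catalan k : ℝ)) (fun k => (1 / 4) ^ k)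
    (fun n k => ((n - k).centralBinom : ℝ) / n.centralBinom) (fun k => (hb k).1) (fun k => (hb k).2)
    (fun n k => by positivity) cb_ratio
    (Summable.of_nonneg_of_le (fun k => mul_nonneg (hb k).1 (by positivity))
      (fun k => mul_le_mul_of_nonneg_right (hb k).2 (by positivity)) summable_catalan)
    summable_catalan (by
      rw [hEv1]
      have : ∀ n : ℕ, ∑ k ∈ Finset.range n, (catalan k : ℝ) * (((n - k).centralBinom : ℝ) / n.centralBinom)
          = 2 - 2 * (1 / ((n : ℝ) + 1)) := by
        intro n
        simp only [mul_div_assoc', ← Finset.sum_div]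
        rw [← hN, hcb]
        have := (hcpos n).ne'
        field_simp
        ring
      simp only [this]
      simpa using (hinv.const_mul 2).const_sub 2)
  rw [hEv2] at key
  have h2 := key.mul ((hinv'.const_add 1).const_mul (1 / 2))
  norm_num at h2
  norm_num
  refine h2.congr' ?_
  filter_upwards [eventually_gt_atTop 0] with n hn
  have hn' : (n : ℝ) ≠ 0 := by positivity
  have := (hcpos n).ne'
  simp only [mul_div_assoc', ← Finset.sum_div]
  rw [← hA, hcb]
  field_simp

end Limits

/-! ### Patterns in lists -/

/-- One step of the pattern `UUDUUD...`. -/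
def StepOK (i a b : ℕ) : Prop := if i % 3 = 2 then b < a else a < b

/-- `s` follows the pattern `UUDUUD...`. -/
def Pat (s : List ℕ) : Prop := ∀ i (h : i + 1 < s.length), StepOK i s[i] s[i + 1]

/-- `l` has a subsequence of length `m` following `UUDUUD...`. -/
def Has (l : List ℕ) (m : ℕ) : Prop := ∃ s : List ℕ, s.Sublist l ∧ s.length = m ∧ Pat s

lemma Pat.left {s t : List ℕ} (h : Pat (s ++ t)) : Pat s := by
  intro i hi
  have := h i (by simp; omega)
  rwa [List.getElem_append_left (by omega), List.getElem_append_left (by omega)] at this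

lemma Has_append_max {L : List ℕ} {M N : ℕ} (hM : ∀ x ∈ L, x < M) (hL : ∀ m, Has L m ↔ m ≤ N)
    (m : ℕ) : Has (L ++ [M]) m ↔ m ≤ appMax N := by
  have key : Has (L ++ [M]) m ↔
      Has L m ∨ ∃ m', m = m' + 1 ∧ (m' = 0 ∨ m' % 3 ≠ 0) ∧ Has L m' := by
    constructor
    · rintro ⟨s, hs, hlen, hp⟩
      rw [List.sublist_append_iff] at hs
      obtain ⟨s1, s2, rfl, h1, h2⟩ := hs
      rw [List.sublist_singleton] at h2
      rcases h2 with rfl | rfl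
      · left; exact ⟨s1, h1, by simpa using hlen, by simpa using hp⟩
      · right
        refine ⟨s1.length, by simpa using hlen.symm, ?_, s1, h1, rfl, hp.left⟩
        by_contra hcon
        push Not at hcon
        have := hp (s1.length - 1) (by simp; omega)
        have e : s1.length - 1 + 1 = s1.length := by omega
        simp only [e] at this
        rw [List.getElem_append_left (by omega), List.getElem_append_right (by omega)] at this
        simp only [StepOK] at this
        rw [if_pos (by omega)] at this
        have h3 := hM _ (h1.subset (List.getElem_mem (l := s1) (n := s1.length - 1) (by omega)))
        simp at this
        omega
    · rintro (⟨s, hs, hlen, hp⟩ | ⟨m', rfl, hm, s, hs, hlen, hp⟩)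
      · exact ⟨s, hs.trans (List.sublist_append_left _ _), hlen, hp⟩
      · refine ⟨s ++ [M], hs.append (List.Sublist.refl _), by simp [hlen], ?_⟩
        intro i hi
        simp at hi
        by_cases h : i + 1 < s.length
        · rw [List.getElem_append_left (by omega), List.getElem_append_left (by omega)]
          exact hp i h
        · rw [List.getElem_append_left (by omega), List.getElem_append_right (by omega)]
          simp only [StepOK]
          rw [if_neg (by omega)]
          have h3 := hM _ (hs.subset (List.getElem_mem (l := s) (n := i) (by omega)))
          simpa using h3
  rw [key]
  simp only [hL]
  unfold appMax
  constructor
  · rintro (h | ⟨m', rfl, h1, h2⟩) <;> split_ifs <;> omega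
  · intro h
    by_cases hm : m ≤ N
    · exact Or.inl hm
    · right
      refine ⟨N, ?_, ?_, le_rfl⟩ <;> split_ifs at h <;> omega

lemma Has_append_low {P R : List ℕ} {p r : ℕ} (hPR : ∀ x ∈ P, ∀ y ∈ R, y < x)
    (hP : ∀ m, Has P m ↔ m ≤ p) (hR : ∀ m, Has R m ↔ m ≤ r) (m : ℕ) :
    Has (P ++ R) m ↔ m ≤ max p (3 * (p / 3) + r) := by
  have key : Has (P ++ R) m ↔
      Has P m ∨ ∃ a b, m = a + b ∧ a % 3 = 0 ∧ Has P a ∧ Has R b := by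
    constructor
    · rintro ⟨s, hs, hlen, hp⟩
      rw [List.sublist_append_iff] at hs
      obtain ⟨s1, s2, rfl, h1, h2⟩ := hs
      by_cases hz : s2 = []
      · subst hz
        left; exact ⟨s1, h1, by simpa using hlen, by simpa using hp⟩
      · right
        have hpos : 0 < s2.length := List.length_pos_iff.mpr hz
        have hmod : s1.length % 3 = 0 := by
          by_contra hcon
          have := hp (s1.length - 1) (by simp; omega)
          have e : s1.length - 1 + 1 = s1.length := by omega
          simp only [e] at this
          rw [List.getElem_append_left (by omega), List.getElem_append_right (by omega)] at this
          simp only [StepOK] at this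
          rw [if_neg (by omega)] at this
          have h3 := hPR _ (h1.subset (List.getElem_mem (l := s1) (n := s1.length - 1) (by omega)))
            _ (h2.subset (List.getElem_mem (l := s2) (n := s1.length - s1.length) (by omega)))
          omega
        refine ⟨s1.length, s2.length, by simpa using hlen.symm, hmod,
          ⟨s1, h1, rfl, hp.left⟩, ⟨s2, h2, rfl, ?_⟩⟩
        intro i hi
        have := hp (s1.length + i) (by simp; omega)
        rw [List.getElem_append_right (by omega), List.getElem_append_right (by omega)] at this
        simp only [StepOK, show s1.length + i - s1.length = i by omega,
          show s1.length + i + 1 - s1.length = i + 1 by omega,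
          show (s1.length + i) % 3 = i % 3 by omega] at this
        exact this
    · rintro (⟨s, hs, hlen, hp⟩ | ⟨a, b, rfl, hm, ⟨s1, h1, l1, p1⟩, ⟨s2, h2, l2, p2⟩⟩)
      · exact ⟨s, hs.trans (List.sublist_append_left _ _), hlen, hp⟩
      · refine ⟨s1 ++ s2, h1.append h2, by simp [l1, l2], ?_⟩
        intro i hi
        simp at hi
        by_cases h : i + 1 < s1.length
        · rw [List.getElem_append_left (by omega), List.getElem_append_left (by omega)]
          exact p1 i h
        · by_cases h' : i < s1.length
          · rw [List.getElem_append_left (by omega), List.getElem_append_right (by omega)]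
            simp only [StepOK]
            rw [if_pos (by omega)]
            exact hPR _ (h1.subset (List.getElem_mem _)) _ (h2.subset (List.getElem_mem _))
          · rw [List.getElem_append_right (by omega), List.getElem_append_right (by omega)]
            have := p2 (i - s1.length) (by omega)
            simp only [StepOK, show i - s1.length + 1 = i + 1 - s1.length by omega,
              show (i - s1.length) % 3 = i % 3 by omega] at this
            exact this
  rw [key]
  simp only [hP, hR]
  constructor
  · rintro (h | ⟨a, b, rfl, h1, h2, h3⟩) <;> omega
  · intro h
    by_cases hm : m ≤ p
    · exact Or.inl hm
    · right
      exact ⟨3 * (p / 3), m - 3 * (p / 3), by omega, by omega, by omega, by omega⟩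

/-! ### The word of a tree -/

def tword : ℕ → BT → List ℕ
  | _, .nil => []
  | off, .node _ L R =>
    (tword (off + R.numNodes) L ++ [off + L.numNodes + R.numNodes]) ++ tword off R

lemma mem_tword (T : BT) : ∀ off x, x ∈ tword off T ↔ off ≤ x ∧ x < off + T.numNodes := by
  induction T with
  | nil => intro off x; simp [tword]
  | node _ L R hL hR =>
    intro off x
    simp only [tword, List.mem_append, hL, hR, List.mem_singleton, BinaryTree.numNodes]
    omega

lemma length_tword (T : BT) : ∀ off, (tword off T).length = T.numNodes := by
  induction T with
  | nil => intro off; simp [tword]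
  | node _ L R hL hR =>
    intro off
    simp only [tword, List.length_append, hL, hR, List.length_singleton, BinaryTree.numNodes]
    omega

lemma Has_tword (T : BT) : ∀ off m, Has (tword off T) m ↔ m ≤ LN T := by
  induction T with
  | nil =>
    intro off m
    simp only [tword, LN, Has, List.sublist_nil]
    constructor
    · rintro ⟨s, rfl, h, _⟩; simp at h; omega
    · intro h; exact ⟨[], rfl, by simp; omega, by intro i hi; simp at hi⟩
  | node _ L R hL hR =>
    intro off m
    simp only [tword, LN]
    apply Has_append_low
    · intro x hx y hy
      simp only [List.mem_append, mem_tword, List.mem_singleton] at hx hy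
      omega
    · apply Has_append_max
      · intro x hx
        simp only [mem_tword] at hx
        omega
      · exact hL _
    · exact hR _

lemma tword_inj (T : BT) : ∀ off T', tword off T = tword off T' → T = T' := by
  induction T with
  | nil =>
    intro off T' h
    have := congrArg List.length h
    rw [length_tword, length_tword] at this
    cases T' with
    | nil => rfl
    | node _ _ _ => simp at this
  | node a L R hL hR =>
    intro off T' h
    have h0 := congrArg List.length h
    rw [length_tword, length_tword] at h0
    cases T' with
    | nil => simp at h0
    | node b L' R' =>
      simp only [BinaryTree.numNodes] at h0
      simp only [tword, List.append_assoc, List.singleton_append] at h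
      have e : off + L'.numNodes + R'.numNodes = off + L.numNodes + R.numNodes := by omega
      rw [e, List.append_cons_inj_of_notMem] at h
      · obtain ⟨h1, -, h2⟩ := h
        have hR' := hR _ _ h2
        subst hR'
        have hL' := hL _ _ h1
        subst hL'
        rfl
      · rw [mem_tword]; omega
      · rw [mem_tword]; omega

/-- List version of avoiding 132. -/
def LAv (l : List ℕ) : Prop := ∀ a b c, [a, b, c].Sublist l → ¬ (a < c ∧ c < b)

lemma LAv_tword (T : BT) : ∀ off, LAv (tword off T) := by
  induction T with
  | nil => intro off a b c h; simp [tword] at h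
  | node _ L R hL hR =>
    intro off a b c h hcon
    simp only [tword, List.append_assoc, List.singleton_append] at h
    rw [List.sublist_append_iff] at h
    obtain ⟨s1, s2, he, h1, h2⟩ := h
    have m1 : ∀ x ∈ s1, off + R.numNodes ≤ x ∧ x < off + R.numNodes + L.numNodes := fun x hx => by
      have := h1.subset hx; rwa [mem_tword] at this
    have m2 : ∀ x ∈ s2, x = off + L.numNodes + R.numNodes ∨ (off ≤ x ∧ x < off + R.numNodes) :=
      fun x hx => by
        have := h2.subset hx; rwa [List.mem_cons, mem_tword] at this
    match s1, he with
    | [], he =>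
      simp at he
      subst he
      rw [List.sublist_cons_iff] at h2
      rcases h2 with h2 | ⟨r, hr, h2⟩
      · exact hR _ a b c h2 hcon
      · simp at hr
        obtain ⟨rfl, rfl⟩ := hr
        have := m2 c (by simp)
        omega
    | [x], he =>
      simp at he
      obtain ⟨rfl, rfl⟩ := he
      have i1 := m1 a (by simp)
      have i2 := m2 b (by simp)
      have i3 := m2 c (by simp)
      omega
    | [x, y], he =>
      simp at he
      obtain ⟨rfl, rfl, rfl⟩ := he
      have i1 := m1 a (by simp)
      have i2 := m1 b (by simp)
      have i3 := m2 c (by simp)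
      omega
    | [x, y, z], he =>
      simp at he
      obtain ⟨rfl, rfl, rfl, rfl⟩ := he
      exact hL _ a b c h1 hcon
    | x :: y :: z :: w :: t, he => simp at he

lemma downclosed_Ico (s : Finset ℕ) (off : ℕ) (h1 : ∀ x ∈ s, off ≤ x)
    (h2 : ∀ x ∈ s, ∀ y, off ≤ y → y ≤ x → y ∈ s) : s = Finset.Ico off (off + s.card) := by
  apply Finset.eq_of_subset_of_card_le
  · intro x hx
    rw [Finset.mem_Ico]
    refine ⟨h1 x hx, ?_⟩
    have : Finset.Ico off (x + 1) ⊆ s := by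
      intro y hy
      rw [Finset.mem_Ico] at hy
      exact h2 x hx y hy.1 (by omega)
    have := Finset.card_le_card this
    simp at this
    have := h1 x hx
    omega
  · simp

lemma exists_tree (n : ℕ) : ∀ off (l : List ℕ), l.Nodup → (∀ x, x ∈ l ↔ off ≤ x ∧ x < off + n) →
    LAv l → ∃ T : BT, T.numNodes = n ∧ tword off T = l := by
  induction n using Nat.strong_induction_on with
  | _ n ih =>
  intro off l hnd hmem hav
  cases n with
  | zero =>
    refine ⟨.nil, rfl, ?_⟩
    symm
    rw [tword, List.eq_nil_iff_forall_not_mem]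
    intro x hx
    rw [hmem] at hx
    omega
  | succ n =>
    have hM : off + n ∈ l := by rw [hmem]; omega
    obtain ⟨L, R, rfl⟩ := List.append_of_mem hM
    rw [List.nodup_append] at hnd
    obtain ⟨ndL, ndR', hdisj⟩ := hnd
    rw [List.nodup_cons] at ndR'
    obtain ⟨hMR, ndR⟩ := ndR'
    have hML : off + n ∉ L := fun h => hdisj _ h _ (List.mem_cons_self) rfl
    have hLR : ∀ x ∈ L, ∀ y ∈ R, y < x := by
      intro x hx y hy
      have hne : x ≠ y := hdisj x hx y (List.mem_cons_of_mem _ hy)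
      have hsub : [x, off + n, y].Sublist (L ++ (off + n) :: R) := by
        have : [x, off + n, y] = [x] ++ (off + n) :: [y] := rfl
        rw [this]
        exact (List.singleton_sublist.mpr hx).append ((List.singleton_sublist.mpr hy).cons_cons _)
      have := hav _ _ _ hsub
      have h3 := (hmem y).1 (by simp [hy])
      have h4 : y ≠ off + n := fun h => hMR (h ▸ hy)
      omega
    have hR : R.toFinset = Finset.Ico off (off + R.length) := by
      rw [← List.toFinset_card_of_nodup ndR]
      apply downclosed_Ico
      · intro x hx
        rw [List.mem_toFinset] at hx
        exact ((hmem x).1 (by simp [hx])).1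
      · intro x hx y hy hyx
        rw [List.mem_toFinset] at hx ⊢
        have hx' := (hmem x).1 (by simp [hx])
        have hxn : x ≠ off + n := fun h => hMR (h ▸ hx)
        have := (hmem y).2 (by omega)
        rw [List.mem_append, List.mem_cons] at this
        rcases this with h | h | h
        · have := hLR y h x hx; omega
        · omega
        · exact h
    have hR' : ∀ x, x ∈ R ↔ off ≤ x ∧ x < off + R.length := by
      intro x
      rw [← List.mem_toFinset, hR, Finset.mem_Ico]
    have hrn : R.length ≤ n := by
      by_contra hc
      exact hMR ((hR' (off + n)).2 (by omega))
    have hL' : ∀ x, x ∈ L ↔ off + R.length ≤ x ∧ x < off + R.length + (n - R.length) := by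
      intro x
      have h1 := hmem x
      have h2 := hR' x
      rw [List.mem_append, List.mem_cons] at h1
      constructor
      · intro hx
        have h3 := h1.1 (Or.inl hx)
        have h4 : x ≠ off + n := fun h => hML (h ▸ hx)
        have h5 : x ∉ R := fun h => by have := hLR x hx x h; omega
        rw [h2] at h5
        omega
      · intro hx
        rcases h1.2 (by omega) with h | h | h
        · exact h
        · omega
        · rw [h2] at h; omega
    obtain ⟨TR, hTR, wR⟩ := ih R.length (by omega) off R ndR hR' (by
      intro a b c h
      exact hav a b c (h.trans ((List.sublist_cons_self _ _).trans (List.sublist_append_right _ _))))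
    obtain ⟨TL, hTL, wL⟩ := ih (n - R.length) (by omega) (off + R.length) L ndL hL' (by
      intro a b c h
      exact hav a b c (h.trans (List.sublist_append_left _ _)))
    refine ⟨.node () TL TR, ?_, ?_⟩
    · simp only [BinaryTree.numNodes]; omega
    · simp only [tword, hTL, hTR, wL, wR, List.append_assoc, List.singleton_append]
      congr 2
      omega

/-! ### Permutations versus lists -/

/-- One-line notation. -/
def plist {n : ℕ} (σ : Equiv.Perm (Fin n)) : List ℕ := (List.finRange n).map fun i => (σ i : ℕ)

lemma sublist_finRange {n : ℕ} (l : List (Fin n)) :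
    l.Sublist (List.finRange n) ↔ l.Pairwise (· < ·) := by
  constructor
  · intro h; exact (List.pairwise_lt_finRange n).sublist h
  · intro h
    have hnd : l.Nodup := h.imp (fun h => ne_of_lt h)
    apply List.sublist_of_subperm_of_pairwise (r := (· ≤ ·))
    · exact List.subperm_of_subset hnd (fun x _ => List.mem_finRange x)
    · exact h.imp (fun h => le_of_lt h)
    · exact List.pairwise_le_finRange n

lemma plist_inj {n : ℕ} (σ τ : Equiv.Perm (Fin n)) (h : plist σ = plist τ) : σ = τ := by
  unfold plist at h
  rw [List.map_inj_left] at h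
  ext i
  exact h i (List.mem_finRange i)

lemma plist_nodup {n : ℕ} (σ : Equiv.Perm (Fin n)) : (plist σ).Nodup := by
  apply List.Nodup.map _ (List.nodup_finRange n)
  intro a b h
  exact σ.injective (Fin.ext h)

lemma mem_plist {n : ℕ} (σ : Equiv.Perm (Fin n)) (x : ℕ) : x ∈ plist σ ↔ 0 ≤ x ∧ x < 0 + n := by
  simp only [plist, List.mem_map, List.mem_finRange, true_and]
  constructor
  · rintro ⟨i, rfl⟩; have := (σ i).2; omega
  · intro h
    exact ⟨σ.symm ⟨x, by omega⟩, by simp⟩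

lemma LAv_plist {n : ℕ} (σ : Equiv.Perm (Fin n)) : LAv (plist σ) ↔ Avoids132 σ := by
  unfold LAv Avoids132 plist
  constructor
  · rintro h ⟨i, j, k, hij, hjk, h1, h2⟩
    refine h (σ i) (σ j) (σ k) ?_ ⟨h1, h2⟩
    have : [i, j, k].Sublist (List.finRange n) := by
      rw [sublist_finRange]; simp [hij, hjk, hij.trans hjk]
    exact this.map (fun i => (σ i : ℕ))
  · intro h a b c hs hcon
    rw [List.sublist_map_iff] at hs
    obtain ⟨l', hl', he⟩ := hs
    rw [sublist_finRange] at hl'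
    match l', he with
    | [i, j, k], he =>
      simp at he hl'
      obtain ⟨rfl, rfl, rfl⟩ := he
      exact h ⟨i, j, k, hl'.1.1, hl'.2, hcon.1, hcon.2⟩

lemma HasRepUUD_iff {n : ℕ} (σ : Equiv.Perm (Fin n)) (k : ℕ) :
    HasRepUUD σ k ↔ Has (plist σ) (3 * k + 1) := by
  constructor
  · rintro ⟨f, hf, hs⟩
    refine ⟨(List.ofFn fun i : Fin (3 * k + 1) => f i).map fun i => (σ i : ℕ), ?_, by simp, ?_⟩
    · apply List.Sublist.map
      rw [sublist_finRange, List.pairwise_ofFn]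
      intro i j hij
      exact hf i j hij (by omega)
    · intro i hi
      simp at hi
      have := hs i hi
      simp only [List.getElem_map, List.getElem_ofFn, StepOK]
      split_ifs at this ⊢ <;> exact this
  · rintro ⟨s, hs, hlen, hp⟩
    unfold plist at hs
    rw [List.sublist_map_iff] at hs
    obtain ⟨l', hl', rfl⟩ := hs
    rw [sublist_finRange, List.pairwise_iff_getElem] at hl'
    simp at hlen
    refine ⟨fun i => if h : i < l'.length then l'[i] else l'[0], ?_, ?_⟩
    · intro a b hab hb
      simp only [show a < l'.length by omega, show b < l'.length by omega, dif_pos]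
      exact hl' a b (by omega) (by omega) hab
    · intro i hi
      have := hp i (by simp; omega)
      simp only [show i < l'.length by omega, show i + 1 < l'.length by omega, dif_pos]
      simp only [List.getElem_map, StepOK] at this
      split_ifs at this ⊢ <;> exact this

lemma LUUD_bounds {n : ℕ} (σ : Equiv.Perm (Fin n)) (N : ℕ) (h : ∀ m, Has (plist σ) m ↔ m ≤ N) :
    LUUD σ ≤ 3 * (N / 3) + 3 ∧ 3 * (N / 3) ≤ LUUD σ + 3 := by
  unfold LUUD
  simp only [HasRepUUD_iff, h]
  have hb : ∀ m ∈ {m : ℕ | ∃ k : ℕ, 1 ≤ k ∧ m = 3 * k + 1 ∧ 3 * k + 1 ≤ N}, m ≤ N := by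
    rintro m ⟨k, _, rfl, h⟩; exact h
  constructor
  · have := csSup_le' (s := {m : ℕ | ∃ k : ℕ, 1 ≤ k ∧ m = 3 * k + 1 ∧ 3 * k + 1 ≤ N}) (a := N) hb
    omega
  · by_cases hN : N < 4
    · omega
    · have := le_csSup (s := {m : ℕ | ∃ k : ℕ, 1 ≤ k ∧ m = 3 * k + 1 ∧ 3 * k + 1 ≤ N}) ⟨N, hb⟩
        (a := 3 * ((N - 1) / 3) + 1) ⟨(N - 1) / 3, by omega, rfl, by omega⟩
      omega

lemma exists_perm (T : BT) (n : ℕ) (hT : T.numNodes = n) :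
    ∃ σ : Equiv.Perm (Fin n), plist σ = tword 0 T := by
  have hlen : (tword 0 T).length = n := by rw [length_tword, hT]
  have hlt : ∀ i : Fin n, (tword 0 T)[(i : ℕ)]'(by omega) < n := by
    intro i
    have := List.getElem_mem (l := tword 0 T) (n := i) (by omega)
    rw [mem_tword] at this
    omega
  let f : Fin n → Fin n := fun i => ⟨(tword 0 T)[(i : ℕ)]'(by omega), hlt i⟩
  have hsurj : Function.Surjective f := by
    intro y
    have : (y : ℕ) ∈ tword 0 T := by rw [mem_tword]; omega
    obtain ⟨i, hi, he⟩ := List.getElem_of_mem this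
    exact ⟨⟨i, by omega⟩, Fin.ext he⟩
  refine ⟨Equiv.ofBijective f ((Fintype.bijective_iff_surjective_and_card f).2 ⟨hsurj, rfl⟩), ?_⟩
  apply List.ext_getElem
  · simp [plist, hlen]
  · intro i h1 h2
    simp [plist, f]

open Classical in
lemma sum_perm (n : ℕ) :
    |(∑ σ ∈ Finset.univ.filter (fun σ : Equiv.Perm (Fin n) => Avoids132 σ), (LUUD σ : ℝ)) -
      3 * TS (fun T => ((LN T / 3 : ℕ) : ℝ)) n| ≤ 3 * catalan n := by
  have hex : ∀ T ∈ BinaryTree.treesOfNumNodesEq n,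
      ∃ σ : Equiv.Perm (Fin n), plist σ = tword 0 T := fun T hT =>
    exists_perm T n (BinaryTree.mem_treesOfNumNodesEq.1 hT)
  choose! g hg using hex
  have hsum : ∑ σ ∈ Finset.univ.filter (fun σ : Equiv.Perm (Fin n) => Avoids132 σ), (LUUD σ : ℝ) =
      ∑ T ∈ BinaryTree.treesOfNumNodesEq n, (LUUD (g T) : ℝ) := by
    symm
    apply Finset.sum_bij (fun T _ => g T)
    · intro T hT
      rw [Finset.mem_filter]
      refine ⟨Finset.mem_univ _, ?_⟩
      rw [← LAv_plist, hg T hT]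
      exact LAv_tword T 0
    · intro T hT T' hT' he
      apply tword_inj T 0
      rw [← hg T hT, ← hg T' hT', he]
    · intro σ hσ
      rw [Finset.mem_filter, ← LAv_plist] at hσ
      obtain ⟨T, hT, hw⟩ := exists_tree n 0 (plist σ) (plist_nodup σ) (mem_plist σ) hσ.2
      have hT' := BinaryTree.mem_treesOfNumNodesEq.2 hT
      exact ⟨T, hT', plist_inj _ _ (by rw [hg T hT', hw])⟩
    · intro T hT; rfl
  rw [hsum, TS, Finset.mul_sum, ← Finset.sum_sub_distrib]
  refine (Finset.abs_sum_le_sum_abs _ _).trans ?_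
  refine (Finset.sum_le_sum (g := fun _ => (3 : ℝ)) ?_).trans ?_
  · intro T hT
    have := LUUD_bounds (g T) (LN T) (by rw [hg T hT]; exact Has_tword T 0)
    have h1 : (LUUD (g T) : ℝ) ≤ 3 * ((LN T / 3 : ℕ) : ℝ) + 3 := by exact_mod_cast this.1
    have h2 : 3 * ((LN T / 3 : ℕ) : ℝ) ≤ LUUD (g T) + 3 := by exact_mod_cast this.2
    rw [abs_le]
    constructor <;> linarith
  · rw [Finset.sum_const, BinaryTree.treesOfNumNodesEq_card_eq_catalan]
    simp [mul_comm]

open Filter Classical in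
/-- The expectation of `L^{UUD}` under the uniform measure on `S_n(132)` is `∼ (3/7)n`. -/
theorem expectation_LUUD_asymptotic :
    Tendsto (fun n : ℕ =>
      (∑ σ ∈ Finset.univ.filter (fun σ : Equiv.Perm (Fin n) => Avoids132 σ), (LUUD σ : ℝ)) /
        ((catalan n : ℝ) * (n : ℝ)))
      atTop (nhds (3 / 7)) := by
  have h1 := A_tendsto.const_mul 3
  have h2 : Tendsto (fun n : ℕ => 3 * (1 / (n : ℝ))) atTop (nhds 0) := by
    simpa using (tendsto_one_div_atTop_nhds_zero_nat (𝕜 := ℝ)).const_mul 3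
  have h3 : Tendsto (fun n : ℕ =>
      (∑ σ ∈ Finset.univ.filter (fun σ : Equiv.Perm (Fin n) => Avoids132 σ), (LUUD σ : ℝ)) /
        ((catalan n : ℝ) * (n : ℝ)) -
      3 * (TS (fun T => ((LN T / 3 : ℕ) : ℝ)) n / ((catalan n : ℝ) * n))) atTop (nhds 0) := by
    apply squeeze_zero_norm _ h2
    intro n
    have hb := sum_perm n
    rw [Real.norm_eq_abs, mul_div_assoc', ← sub_div, abs_div,
      abs_of_nonneg (show (0 : ℝ) ≤ (catalan n : ℝ) * n by positivity)]
    refine (div_le_div_of_nonneg_right hb (by positivity)).trans ?_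
    rcases Nat.eq_zero_or_pos (catalan n) with hc | hc
    · simp [hc]
    · have : (catalan n : ℝ) ≠ 0 := by positivity
      apply le_of_eq
      by_cases hn : (n : ℝ) = 0
      · simp [hn]
      · field_simp
  have h4 := h3.add h1
  norm_num at h4 ⊢
  exact h4
end

section
/- Let L denote the length of the longest subsequence repeating the pattern UUUD. Then the expected value of L over uniformly random 132-avoiding permutations of [n] is asymptotic to (4/11)·n as n → ∞. -/
/-- `σ` has a subsequence of length `4k+1` whose up/down word is `(UUUD)^k`. -/
def HasRepUUUD {n : ℕ} (σ : Equiv.Perm (Fin n)) (k : ℕ) : Prop :=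
  ∃ f : ℕ → Fin n, (∀ a b : ℕ, a < b → b ≤ 4 * k → f a < f b) ∧
    ∀ i < 4 * k, if i % 4 = 3 then σ (f (i + 1)) < σ (f i) else σ (f i) < σ (f (i + 1))

/-- The length of the longest subsequence of `σ` repeating the pattern `UUUD`:
it is `4k+1` for the largest `k ≥ 1` achievable, and `0` if no complete `UUUD` occurs. -/
noncomputable def LUUUD {n : ℕ} (σ : Equiv.Perm (Fin n)) : ℕ :=
  sSup {m : ℕ | ∃ k : ℕ, 1 ≤ k ∧ m = 4 * k + 1 ∧ HasRepUUUD σ k}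

namespace UUUD

abbrev T := BinaryTree Unit

/-- The 132-avoiding word of a binary tree, on the values `o, …, o + |t| - 1`. -/
def W : T → ℕ → List ℕ
  | .nil, _ => []
  | .node _ L R, o => W L (o + R.numNodes) ++ (o + L.numNodes + R.numNodes) :: W R o

theorem length_W (t : T) (o : ℕ) : (W t o).length = t.numNodes := by
  induction t generalizing o with
  | nil => simp [W]
  | node v L R hL hR => simp [W, hL, hR]; omega

theorem mem_W (t : T) (o x : ℕ) : x ∈ W t o ↔ o ≤ x ∧ x < o + t.numNodes := by
  induction t generalizing o with
  | nil => simp [W]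
  | node v L R hL hR => simp [W, hL, hR]; omega

theorem nodup_W (t : T) (o : ℕ) : (W t o).Nodup := by
  induction t generalizing o with
  | nil => simp [W]
  | node v L R hL hR =>
    simp only [W, List.nodup_append, List.nodup_cons, hL, hR, mem_W, List.mem_cons]
    refine ⟨trivial, ⟨by omega, trivial⟩, ?_⟩
    intro a ha b hb
    omega

def Av (l : List ℕ) : Prop := l.Triplewise (fun a b c => ¬ (a < c ∧ c < b))

theorem av_W (t : T) (o : ℕ) : Av (W t o) := by
  induction t generalizing o with
  | nil => simp [W, Av]
  | node v L R hL hR =>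
    unfold Av at *
    simp only [W, List.triplewise_append, List.triplewise_cons, hL, hR, true_and, and_true,
      List.mem_cons, mem_W, List.pairwise_cons]
    refine ⟨?_, ?_, ?_⟩
    · apply List.pairwise_of_forall_mem_list
      simp only [mem_W]; intros; omega
    · intro a ha
      refine ⟨by intros; omega, ?_⟩
      apply List.pairwise_of_forall_mem_list
      simp only [mem_W]; intros; omega
    · intro a ha
      apply List.pairwise_of_forall_mem_list
      simp only [mem_W]; intros; omega

theorem W_inj (t t' : T) (o : ℕ) (h : W t o = W t' o) : t = t' := by
  induction t generalizing o t' with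
  | nil => cases t' with
    | nil => rfl
    | node => simp [W] at h
  | node v L R hL hR => cases t' with
    | nil => simp [W] at h
    | node v' L' R' =>
      have hl := congrArg List.length h
      simp only [length_W, BinaryTree.numNodes] at hl
      have hm : o + L'.numNodes + R'.numNodes = o + L.numNodes + R.numNodes := by omega
      simp only [W, hm] at h
      rw [List.append_cons_inj_of_notMem (by simp [mem_W]; omega) (by simp [mem_W])] at h
      obtain ⟨h1, -, h2⟩ := h
      have h3 := congrArg List.length h2
      simp only [length_W] at h3
      rw [← h3] at h1
      rw [hL _ _ h1, hR _ _ h2]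

theorem W_surj (n : ℕ) (o : ℕ) (l : List ℕ) (hl : l.length = n) (hn : l.Nodup)
    (hm : ∀ x, x ∈ l ↔ o ≤ x ∧ x < o + n) (ha : Av l) :
    ∃ t : T, t.numNodes = n ∧ W t o = l := by
  induction n using Nat.strong_induction_on generalizing o l with
  | _ n ih =>
  rcases n with _ | n
  · exact ⟨.nil, rfl, by simp [W, List.length_eq_zero_iff.mp hl]⟩
  have hmem : o + n ∈ l := by rw [hm]; omega
  obtain ⟨l1, l2, rfl⟩ := List.append_of_mem hmem
  unfold Av at ha
  simp only [List.triplewise_append, List.triplewise_cons, List.mem_cons, List.pairwise_cons] at ha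
  obtain ⟨a1, ⟨-, a2⟩, a3, -⟩ := ha
  simp only [List.nodup_append, List.nodup_cons, List.mem_cons] at hn
  obtain ⟨n1, ⟨n3, n2⟩, n4⟩ := hn
  simp only [List.length_append, List.length_cons] at hl
  simp only [List.mem_append, List.mem_cons] at hm
  have gt : ∀ a ∈ l1, ∀ b ∈ l2, b < a := by
    intro a haa b hb
    have h1 := (a3 a haa).1 b hb
    have h2 := n4 a haa b (Or.inr hb)
    have h3 := (hm b).1 (Or.inr (Or.inr hb))
    have h4 : b ≠ o + n := fun h => n3 (h ▸ hb)
    omega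
  have r1 : ∀ x ∈ l1, o + l2.length ≤ x ∧ x < o + n := by
    intro x hx
    have h1 := (hm x).1 (Or.inl hx)
    have h2 := n4 x hx _ (Or.inl rfl)
    have : l2.toFinset ⊆ Finset.Ico o x := by
      intro y hy
      rw [List.mem_toFinset] at hy
      have := gt x hx y hy
      have h3 := (hm y).1 (Or.inr (Or.inr hy))
      rw [Finset.mem_Ico]; omega
    have := Finset.card_le_card this
    rw [List.toFinset_card_of_nodup n2, Nat.card_Ico] at this
    omega
  have r2 : ∀ x ∈ l2, o ≤ x ∧ x < o + l2.length := by
    intro x hx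
    have h1 := (hm x).1 (Or.inr (Or.inr hx))
    have : l1.toFinset ⊆ Finset.Ico (x+1) (o+n) := by
      intro y hy
      rw [List.mem_toFinset] at hy
      have := gt y hy x hx
      have h3 := r1 y hy
      rw [Finset.mem_Ico]; omega
    have := Finset.card_le_card this
    rw [List.toFinset_card_of_nodup n1, Nat.card_Ico] at this
    have h4 : x ≠ o + n := fun h => n3 (h ▸ hx)
    omega
  obtain ⟨L, hL, hL'⟩ := ih l1.length (by omega) (o + l2.length) l1 rfl n1 (by
    intro x
    constructor
    · intro hx; have := r1 x hx; omega
    · intro hx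
      rcases (hm x).2 (by omega) with h | h | h
      · exact h
      · omega
      · have := r2 x h; omega) a1
  obtain ⟨R, hR, hR'⟩ := ih l2.length (by omega) o l2 rfl n2 (by
    intro x
    constructor
    · intro hx; exact r2 x hx
    · intro hx
      rcases (hm x).2 (by omega) with h | h | h
      · have := r1 x h; omega
      · omega
      · exact h) a2
  refine ⟨.node () L R, by simp [hL, hR]; omega, ?_⟩
  simp only [W, hL, hR, hL', hR']
  congr 2
  omega

def up (g : ℕ) : ℕ := if g % 4 = 0 ∧ g ≠ 0 then g else g + 1

/-- Maximal length of a subsequence with up/down word an initial part of `(UUUD)^∞`. -/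
def G : T → ℕ
  | .nil => 0
  | .node _ L R => max (up (G L)) (4 * (up (G L) / 4) + G R)

def UD (s : List ℕ) : Prop :=
  ∀ i (h : i + 1 < s.length), if i % 4 = 3 then s[i+1] < s[i] else s[i] < s[i+1]

theorem UD_left {s1 s2 : List ℕ} (h : UD (s1 ++ s2)) : UD s1 := by
  intro i hi
  have := h i (by simp; omega)
  rwa [List.getElem_append_left (by omega), List.getElem_append_left (by omega)] at this

theorem UD_take {s : List ℕ} (h : UD s) (n : ℕ) : UD (s.take n) := by
  apply UD_left (s2 := s.drop n)
  rwa [List.take_append_drop]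

theorem UD_concat {s : List ℕ} {m : ℕ} (h : UD s) (hm : ∀ x ∈ s, x < m)
    (hl : ¬ (s.length % 4 = 0 ∧ s.length ≠ 0)) : UD (s ++ [m]) := by
  intro i hi
  simp only [List.length_append, List.length_singleton] at hi
  by_cases h1 : i + 1 < s.length
  · have := h i h1
    rwa [List.getElem_append_left (by omega), List.getElem_append_left (by omega)]
  · have h2 : i + 1 = s.length := by omega
    rw [if_neg (by omega), List.getElem_append_left (by omega),
      List.getElem_append_right (by omega)]
    simpa using hm _ (List.getElem_mem _)

theorem UD_append {s1 s2 : List ℕ} (h1 : UD s1) (h2 : UD s2) (hm : ∀ a ∈ s1, ∀ b ∈ s2, b < a)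
    (hl : s1.length % 4 = 0) : UD (s1 ++ s2) := by
  intro i hi
  simp only [List.length_append] at hi
  rcases lt_trichotomy (i + 1) s1.length with h | h | h
  · have := h1 i h
    rwa [List.getElem_append_left (by omega), List.getElem_append_left (by omega)]
  · rw [if_pos (by omega), List.getElem_append_right (by omega),
      List.getElem_append_left (by omega)]
    exact hm _ (List.getElem_mem _) _ (List.getElem_mem _)
  · have := h2 (i - s1.length) (by omega)
    rw [List.getElem_append_right (by omega), List.getElem_append_right (by omega)]
    have e : (i - s1.length) % 4 = i % 4 := by omega
    have e2 : i + 1 - s1.length = i - s1.length + 1 := by omega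
    simp only [e2]
    rwa [e] at this

theorem UD_concat_rev {s : List ℕ} {m : ℕ} (h : UD (s ++ [m])) (hm : ∀ x ∈ s, x < m) :
    ¬ (s.length % 4 = 0 ∧ s.length ≠ 0) := by
  rintro ⟨h1, h2⟩
  have := h (s.length - 1) (by simp; omega)
  rw [if_pos (by omega), List.getElem_append_right (by omega),
      List.getElem_append_left (by omega)] at this
  have h3 := hm _ (List.getElem_mem (l := s) (n := s.length - 1) (by omega))
  simp at this
  omega

theorem UD_append_rev {s1 s2 : List ℕ} (h : UD (s1 ++ s2)) (hm : ∀ a ∈ s1, ∀ b ∈ s2, b < a)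
    (hn2 : s2 ≠ []) : s1.length % 4 = 0 ∧ UD s2 := by
  have hl2 : 0 < s2.length := List.length_pos_iff.mpr hn2
  have h1 : s1.length % 4 = 0 := by
    by_contra hc
    have := h (s1.length - 1) (by simp; omega)
    rw [if_neg (by omega), List.getElem_append_left (by omega),
      List.getElem_append_right (by omega)] at this
    have h3 := hm _ (List.getElem_mem (l := s1) (n := s1.length - 1) (by omega)) _
      (List.getElem_mem (l := s2) (n := 0) hl2)
    have e : s1.length - 1 + 1 - s1.length = 0 := by omega
    simp only [e] at this
    omega
  refine ⟨h1, ?_⟩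
  intro i hi
  have := h (s1.length + i) (by simp; omega)
  rw [List.getElem_append_right (by omega), List.getElem_append_right (by omega)] at this
  have e : (s1.length + i) % 4 = i % 4 := by omega
  have e2 : s1.length + i + 1 - s1.length = i + 1 := by omega
  have e3 : s1.length + i - s1.length = i := by omega
  simp only [e2, e3] at this
  rwa [e] at this

theorem G_lower (t : T) (o : ℕ) : ∃ s, s.Sublist (W t o) ∧ UD s ∧ s.length = G t := by
  induction t generalizing o with
  | nil => exact ⟨[], by simp [W], by intro i hi; simp at hi, rfl⟩
  | node v L R hL hR =>
    obtain ⟨s1, a1, b1, c1⟩ := hL (o + R.numNodes)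
    obtain ⟨s2, a2, b2, c2⟩ := hR o
    set m := o + L.numNodes + R.numNodes with hm
    have e : W (.node v L R) o = (W L (o + R.numNodes) ++ [m]) ++ W R o := by simp [W, hm]
    rw [e]
    have key : ∃ s, s.Sublist (W L (o + R.numNodes) ++ [m]) ∧ UD s ∧ s.length = up (G L) := by
      unfold up
      split_ifs with hc
      · exact ⟨s1, a1.trans (List.sublist_append_left _ _), b1, c1⟩
      · refine ⟨s1 ++ [m], a1.append_right _, UD_concat b1 ?_ (by rwa [c1]), by simp [c1]⟩
        intro x hx
        have := (mem_W _ _ _).1 (a1.subset hx)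
        omega
    obtain ⟨s, a, b, c⟩ := key
    simp only [G]
    rcases le_total (4 * (up (G L) / 4) + G R) (up (G L)) with h | h
    · rw [max_eq_left h]
      exact ⟨s, a.trans (List.sublist_append_left _ _), b, c⟩
    · rw [max_eq_right h]
      have hl : (s.take (4 * (up (G L) / 4))).length = 4 * (up (G L) / 4) := by
        rw [List.length_take, c]; omega
      have ha := (List.take_sublist (4 * (up (G L) / 4)) s).trans a
      refine ⟨s.take (4 * (up (G L) / 4)) ++ s2, ha.append a2, UD_append (UD_take b _) b2 ?_ ?_, ?_⟩
      · intro x hx y hy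
        have h1 := ha.subset hx
        have h2 := (mem_W _ _ _).1 (a2.subset hy)
        simp only [List.mem_append, mem_W, List.mem_singleton] at h1
        omega
      · rw [hl]; omega
      · rw [List.length_append, hl, c2]

theorem G_upper (t : T) (o : ℕ) (s : List ℕ) (hs : s.Sublist (W t o)) (hu : UD s) :
    s.length ≤ G t := by
  induction t generalizing o s with
  | nil => simp [W] at hs; simp [hs, G]
  | node v L R hL hR =>
    set m := o + L.numNodes + R.numNodes with hm
    have e : W (.node v L R) o = (W L (o + R.numNodes) ++ [m]) ++ W R o := by simp [W, hm]
    rw [e, List.sublist_append_iff] at hs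
    obtain ⟨s1, s2, rfl, h1, h2⟩ := hs
    have hs1 : s1.length ≤ up (G L) := by
      have h1' := h1
      rw [List.sublist_append_iff] at h1'
      obtain ⟨p, q, rfl, hp, hq⟩ := h1'
      have hul := UD_left hu
      have hp' := hL _ p hp (UD_left hul)
      have hq' := hq.length_le
      simp only [List.length_singleton] at hq'
      rcases Nat.lt_or_ge q.length 1 with hlt | hge
      · rw [List.length_append]; unfold up; split_ifs <;> omega
      · have : q = [m] := hq.eq_of_length (by simp; omega)
        subst this
        have hr := UD_concat_rev hul (by
          intro x hx
          have := (mem_W _ _ _).1 (hp.subset hx)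
          omega)
        rw [List.length_append, List.length_singleton]; unfold up; split_ifs <;> omega
    simp only [G]
    by_cases h0 : s2 = []
    · subst h0; simp only [List.append_nil]; omega
    · obtain ⟨hr1, hr2⟩ := UD_append_rev hu (by
        intro x hx y hy
        have h1 := h1.subset hx
        have h2 := (mem_W _ _ _).1 (h2.subset hy)
        simp only [List.mem_append, mem_W, List.mem_singleton] at h1
        omega) h0
      have := hR _ _ h2 hr2
      rw [List.length_append]
      omega

def P {n : ℕ} (σ : Equiv.Perm (Fin n)) : List ℕ := List.ofFn (fun i => (σ i : ℕ))

theorem length_P {n : ℕ} (σ : Equiv.Perm (Fin n)) : (P σ).length = n := by simp [P]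

theorem getElem_P {n : ℕ} (σ : Equiv.Perm (Fin n)) (i : ℕ) (h : i < (P σ).length) :
    (P σ)[i] = σ ⟨i, by simpa [P] using h⟩ := by simp [P]

theorem avoids_iff {n : ℕ} (σ : Equiv.Perm (Fin n)) : Avoids132 σ ↔ Av (P σ) := by
  unfold Avoids132 Av
  rw [List.triplewise_iff_getElem]
  constructor
  · intro h i j k hij hjk hk hc
    simp only [getElem_P] at hc
    exact h ⟨_, _, _, hij, hjk, hc.1, hc.2⟩
  · rintro h ⟨i, j, k, hij, hjk, h1, h2⟩
    apply h i j k hij hjk (by simp [P])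
    simp only [getElem_P]
    exact ⟨h1, h2⟩

theorem nodup_P {n : ℕ} (σ : Equiv.Perm (Fin n)) : (P σ).Nodup := by
  unfold P
  rw [List.nodup_ofFn]
  intro a b h
  exact σ.injective (Fin.ext h)

theorem mem_P {n : ℕ} (σ : Equiv.Perm (Fin n)) (x : ℕ) : x ∈ P σ ↔ 0 ≤ x ∧ x < 0 + n := by
  unfold P
  rw [List.mem_ofFn]
  simp only [zero_le, true_and, zero_add]
  constructor
  · rintro ⟨i, rfl⟩; exact (σ i).2
  · intro h; exact ⟨σ.symm ⟨x, h⟩, by simp⟩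

theorem exists_tree {n : ℕ} (σ : Equiv.Perm (Fin n)) (h : Avoids132 σ) :
    ∃ t : T, t.numNodes = n ∧ W t 0 = P σ :=
  W_surj n 0 (P σ) (length_P σ) (nodup_P σ) (mem_P σ) ((avoids_iff σ).1 h)

theorem P_inj {n : ℕ} (σ τ : Equiv.Perm (Fin n)) (h : P σ = P τ) : σ = τ := by
  unfold P at h
  have := List.ofFn_injective h
  ext i
  exact congrFun this i

theorem exists_perm {n : ℕ} (t : T) (h : t.numNodes = n) :
    ∃ σ : Equiv.Perm (Fin n), Avoids132 σ ∧ W t 0 = P σ := by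
  have hl : (W t 0).length = n := by rw [length_W, h]
  have hb : ∀ i : Fin n, (W t 0)[(i : ℕ)]'(by omega) < n := by
    intro i
    have := (mem_W t 0 _).1 (List.getElem_mem (l := W t 0) (n := i) (by omega))
    omega
  let f : Fin n → Fin n := fun i => ⟨(W t 0)[(i : ℕ)]'(by omega), hb i⟩
  have hf : Function.Injective f := by
    intro a b hab
    have h1 := congrArg Fin.val hab
    have := ((nodup_W t 0).getElem_inj_iff).1 h1
    exact Fin.ext this
  have e : W t 0 = P (Equiv.ofBijective f (Finite.injective_iff_bijective.1 hf)) := by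
    apply List.ext_getElem
    · rw [hl, length_P]
    · intro i h1 h2
      rw [getElem_P]
      simp [f]
  refine ⟨_, ?_, e⟩
  rw [avoids_iff, ← e]
  exact av_W t 0

theorem rep_to_list {n : ℕ} (σ : Equiv.Perm (Fin n)) (k : ℕ) (h : HasRepUUUD σ k) :
    ∃ s : List ℕ, s.Sublist (P σ) ∧ UD s ∧ s.length = 4 * k + 1 := by
  obtain ⟨f, h1, h2⟩ := h
  refine ⟨List.ofFn (fun i : Fin (4 * k + 1) => (σ (f i) : ℕ)), ?_, ?_, by simp⟩
  · rw [List.sublist_iff_exists_fin_orderEmbedding_get_eq]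
    refine ⟨OrderEmbedding.ofStrictMono (fun i => ⟨f i, by rw [length_P]; exact (f i).2⟩) ?_, ?_⟩
    · intro a b hab
      have hb := b.2
      simp only [List.length_ofFn] at hb
      exact h1 a b hab (by omega)
    · intro i
      simp only [List.get_eq_getElem, getElem_P, List.getElem_ofFn]
      rfl
  · intro i hi
    simp only [List.length_ofFn] at hi
    have := h2 i (by omega)
    simp only [List.getElem_ofFn]
    split_ifs with hc
    · rw [if_pos hc] at this; exact this
    · rw [if_neg hc] at this; exact this

theorem list_to_rep {n : ℕ} (σ : Equiv.Perm (Fin n)) (k : ℕ) (s : List ℕ) (h1 : s.Sublist (P σ))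
    (h2 : UD s) (h3 : 4 * k + 1 ≤ s.length) : HasRepUUUD σ k := by
  rw [List.sublist_iff_exists_fin_orderEmbedding_get_eq] at h1
  obtain ⟨g, hg⟩ := h1
  have hlt : ∀ i : Fin s.length, (g i : ℕ) < n := fun i => by
    exact (g i).2.trans_eq (length_P σ)
  have hv : ∀ i : Fin s.length, s[(i : ℕ)] = σ ⟨g i, hlt i⟩ := by
    intro i
    have := hg i
    simp only [List.get_eq_getElem, getElem_P] at this
    exact this
  refine ⟨fun i => if h : i < s.length then ⟨g ⟨i, h⟩, hlt _⟩ else ⟨g ⟨0, by omega⟩, hlt _⟩, ?_, ?_⟩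
  · intro a b hab hb
    beta_reduce
    rw [dif_pos (by omega), dif_pos (by omega)]
    exact g.strictMono (a := ⟨a, _⟩) (b := ⟨b, _⟩) hab
  · intro i hi
    have := h2 i (by omega)
    beta_reduce
    rw [dif_pos (show i < s.length by omega), dif_pos (show i + 1 < s.length by omega)]
    have e1 := hv ⟨i, by omega⟩
    have e2 := hv ⟨i + 1, by omega⟩
    simp only at e1 e2
    rw [e1, e2] at this
    exact this

theorem LUUUD_bounds {n : ℕ} (σ : Equiv.Perm (Fin n)) (t : T) (h : W t 0 = P σ) :
    LUUUD σ ≤ G t ∧ G t ≤ LUUUD σ + 5 := by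
  have hub : ∀ m ∈ {m : ℕ | ∃ k : ℕ, 1 ≤ k ∧ m = 4 * k + 1 ∧ HasRepUUUD σ k}, m ≤ G t := by
    rintro m ⟨k, hk, rfl, hr⟩
    obtain ⟨s, a, b, c⟩ := rep_to_list σ k hr
    rw [← c]
    exact G_upper t 0 s (h ▸ a) b
  constructor
  · unfold LUUUD
    rcases Set.eq_empty_or_nonempty {m : ℕ | ∃ k : ℕ, 1 ≤ k ∧ m = 4 * k + 1 ∧ HasRepUUUD σ k} with
      he | he
    · rw [he]; simp
    · exact csSup_le he hub
  · by_cases hG : G t < 5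
    · omega
    · obtain ⟨s, a, b, c⟩ := G_lower t 0
      have hr := list_to_rep σ ((G t - 1) / 4) s (h ▸ a) b (by omega)
      have : 4 * ((G t - 1) / 4) + 1 ≤ LUUUD σ :=
        le_csSup ⟨G t, hub⟩ ⟨_, by omega, rfl, hr⟩
      omega

open BinaryTree in
open Classical in
theorem sum_transfer (n : ℕ) :
    (∑ σ ∈ Finset.univ.filter (fun σ : Equiv.Perm (Fin n) => Avoids132 σ), (LUUUD σ : ℝ))
      ≤ ∑ t ∈ treesOfNumNodesEq n, (G t : ℝ) ∧
    ∑ t ∈ treesOfNumNodesEq n, (G t : ℝ) ≤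
    (∑ σ ∈ Finset.univ.filter (fun σ : Equiv.Perm (Fin n) => Avoids132 σ), (LUUUD σ : ℝ))
      + 5 * catalan n := by
  have key : ∀ f : T → ℝ, ∑ t ∈ treesOfNumNodesEq n, f t =
      ∑ σ ∈ Finset.univ.filter (fun σ : Equiv.Perm (Fin n) => Avoids132 σ),
        f (if h : Avoids132 σ then (exists_tree σ h).choose else .nil) := by
    intro f
    symm
    apply Finset.sum_bij
      (fun σ _ => (if h : Avoids132 σ then (exists_tree σ h).choose else .nil))
    · intro σ hσ
      have hσ := (Finset.mem_filter.1 hσ).2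
      rw [dif_pos hσ, mem_treesOfNumNodesEq]
      exact (exists_tree σ hσ).choose_spec.1
    · intro σ hσ τ hτ he
      have hσ := (Finset.mem_filter.1 hσ).2
      have hτ := (Finset.mem_filter.1 hτ).2
      rw [dif_pos hσ, dif_pos hτ] at he
      apply P_inj
      rw [← (exists_tree σ hσ).choose_spec.2, ← (exists_tree τ hτ).choose_spec.2, he]
    · intro t ht
      rw [mem_treesOfNumNodesEq] at ht
      obtain ⟨σ, hσ, he⟩ := exists_perm t ht
      refine ⟨σ, by simpa using hσ, ?_⟩
      rw [dif_pos hσ]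
      apply W_inj _ _ 0
      rw [(exists_tree σ hσ).choose_spec.2, he]
    · intros; rfl
  have hc := key (fun _ => 1)
  rw [Finset.sum_const, treesOfNumNodesEq_card_eq_catalan] at hc
  simp only [nsmul_eq_mul, mul_one] at hc
  rw [hc, key (fun t => (G t : ℝ)), Finset.mul_sum, ← Finset.sum_add_distrib]
  constructor
  · apply Finset.sum_le_sum
    intro σ hσ
    have hσ := (Finset.mem_filter.1 hσ).2
    rw [dif_pos hσ]
    exact_mod_cast (LUUUD_bounds σ _ (exists_tree σ hσ).choose_spec.2).1
  · apply Finset.sum_le_sum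
    intro σ hσ
    have hσ := (Finset.mem_filter.1 hσ).2
    rw [dif_pos hσ]
    exact_mod_cast (LUUUD_bounds σ _ (exists_tree σ hσ).choose_spec.2).2

open BinaryTree in
theorem sum_trees_succ (n : ℕ) (f : T → ℝ) :
    ∑ t ∈ treesOfNumNodesEq (n + 1), f t = ∑ p ∈ Finset.HasAntidiagonal.antidiagonal n,
      ∑ L ∈ treesOfNumNodesEq p.1, ∑ R ∈ treesOfNumNodesEq p.2, f (.node () L R) := by
  rw [treesOfNumNodesEq_succ, Finset.sum_biUnion]
  · apply Finset.sum_congr rfl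
    rintro ⟨i, j⟩ _
    rw [Finset.sum_map, Finset.sum_product]
    rfl
  · simp_rw [Set.PairwiseDisjoint, Set.Pairwise, Function.onFun, Finset.disjoint_left]
    aesop

def kap : T → ℕ
  | .nil => 0
  | .node _ L R => kap L + kap R + if G L % 4 = 3 then 1 else 0

theorem G_div (t : T) : G t / 4 = kap t := by
  induction t with
  | nil => rfl
  | node v L R hL hR =>
    simp only [G, kap, ← hL, ← hR, up]
    split_ifs <;> omega

open BinaryTree in
noncomputable def u (n : ℕ) : ℝ := ∑ t ∈ treesOfNumNodesEq n, if G t % 4 = 3 then 1 else 0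

open BinaryTree in
noncomputable def K (n : ℕ) : ℝ := ∑ t ∈ treesOfNumNodesEq n, (kap t : ℝ)

noncomputable def d (n : ℕ) : ℝ := if n = 0 then 0 else ((n : ℝ) + 1) * catalan n / 2

open BinaryTree in
theorem sum_one (n : ℕ) : ∑ _t ∈ treesOfNumNodesEq n, (1 : ℝ) = catalan n := by
  rw [Finset.sum_const, treesOfNumNodesEq_card_eq_catalan]; simp

theorem K_succ (n : ℕ) : K (n + 1) = ∑ p ∈ Finset.HasAntidiagonal.antidiagonal n,
    (K p.1 * catalan p.2 + catalan p.1 * K p.2 + u p.1 * catalan p.2) := by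
  unfold K u
  rw [sum_trees_succ]
  apply Finset.sum_congr rfl
  rintro ⟨i, j⟩ _
  simp only [kap, ← sum_one, Finset.sum_mul_sum, ← Finset.sum_add_distrib]
  apply Finset.sum_congr rfl; intro L _
  apply Finset.sum_congr rfl; intro R _
  push_cast
  ring

theorem catalan_conv (n : ℕ) : ∑ p ∈ Finset.HasAntidiagonal.antidiagonal n,
    (catalan p.1 : ℝ) * (((p.2 : ℝ) + 1) * catalan p.2) = ((n : ℝ) + 2) / 2 * catalan (n + 1) := by
  have h1 : ∑ p ∈ Finset.HasAntidiagonal.antidiagonal n,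
    (catalan p.1 : ℝ) * (((p.2 : ℝ) + 1) * catalan p.2) = ∑ p ∈ Finset.HasAntidiagonal.antidiagonal n,
    (catalan p.2 : ℝ) * (((p.1 : ℝ) + 1) * catalan p.1) :=
    (Finset.Nat.sum_antidiagonal_swap (f := fun p : ℕ × ℕ =>
      (catalan p.2 : ℝ) * (((p.1 : ℝ) + 1) * catalan p.1)) (n := n))
  have h2 : ∑ p ∈ Finset.HasAntidiagonal.antidiagonal n, (catalan p.1 : ℝ) * (((p.2 : ℝ) + 1) * catalan p.2) +
      ∑ p ∈ Finset.HasAntidiagonal.antidiagonal n, (catalan p.2 : ℝ) * (((p.1 : ℝ) + 1) * catalan p.1) =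
      ((n : ℝ) + 2) * catalan (n + 1) := by
    rw [← Finset.sum_add_distrib, catalan_succ']
    push_cast
    rw [Finset.mul_sum]
    apply Finset.sum_congr rfl
    intro p hp
    have : (n : ℝ) = p.1 + p.2 := by exact_mod_cast (Finset.HasAntidiagonal.mem_antidiagonal.1 hp).symm
    rw [this]; ring
  linarith

theorem d_conv (n : ℕ) : 2 * ∑ p ∈ Finset.HasAntidiagonal.antidiagonal n, (catalan p.1 : ℝ) * d p.2 + catalan n =
    ((n : ℝ) + 2) / 2 * catalan (n + 1) := by
  rw [← catalan_conv]
  have : (catalan n : ℝ) = ∑ p ∈ Finset.HasAntidiagonal.antidiagonal n,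
      if p = (n, 0) then (catalan n : ℝ) else 0 := by
    rw [Finset.sum_ite_eq', if_pos (by simp)]
  rw [this, Finset.mul_sum, ← Finset.sum_add_distrib]
  apply Finset.sum_congr rfl
  rintro ⟨i, j⟩ hp
  have hp := Finset.HasAntidiagonal.mem_antidiagonal.1 hp
  simp only at hp
  unfold d
  by_cases hj : j = 0
  · subst hj
    have : i = n := by omega
    subst this
    simp
  · simp [hj]; ring

theorem d_succ (n : ℕ) : d (n + 1) = 2 * ∑ p ∈ Finset.HasAntidiagonal.antidiagonal n, (catalan p.1 : ℝ) * d p.2 +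
    catalan n := by
  rw [d_conv]
  simp [d]; ring

theorem cat_rec (n : ℕ) : ((n : ℝ) + 2) * catalan (n + 1) = 2 * (2 * n + 1) * catalan n := by
  have h1 := succ_mul_catalan_eq_centralBinom n
  have h2 := succ_mul_catalan_eq_centralBinom (n + 1)
  have h3 := Nat.succ_mul_centralBinom_succ n
  rw [← h1, ← h2] at h3
  have h4 : ((n : ℝ) + 1) * (((n : ℝ) + 1 + 1) * catalan (n + 1)) =
    2 * (2 * n + 1) * ((n + 1) * catalan n) := by exact_mod_cast h3
  have h5 : (n : ℝ) + 1 ≠ 0 := by positivity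
  apply mul_left_cancel₀ h5
  linarith

theorem d_total (n : ℕ) : ∑ p ∈ Finset.HasAntidiagonal.antidiagonal n, (catalan p.1 : ℝ) * d p.2 =
    n * catalan n := by
  have h1 := d_conv n
  have h2 := cat_rec n
  linarith

open PowerSeries in
theorem K_eq (n : ℕ) : K n = ∑ p ∈ Finset.HasAntidiagonal.antidiagonal n, u p.1 * d p.2 := by
  let Ks : PowerSeries ℝ := mk K
  let Us : PowerSeries ℝ := mk u
  let Cs : PowerSeries ℝ := mk (fun n => (catalan n : ℝ))
  let Ds : PowerSeries ℝ := mk d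
  have e1 : Ks = X * (2 * Cs * Ks + Us * Cs) := by
    ext m
    rcases m with _ | m
    · simp [Ks, K, kap]
    · rw [coeff_succ_X_mul]
      have : 2 * Cs * Ks + Us * Cs = Ks * Cs + Cs * Ks + Us * Cs := by ring
      rw [this]
      simp only [map_add, coeff_mul, Ks, Us, Cs, coeff_mk, K_succ, Finset.sum_add_distrib]
  have e2 : Ds = X * (2 * Cs * Ds + Cs) := by
    ext m
    rcases m with _ | m
    · simp [Ds, d]
    · rw [coeff_succ_X_mul]
      have : 2 * Cs * Ds + Cs = Cs * Ds + Cs * Ds + Cs := by ring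
      rw [this]
      simp only [map_add, coeff_mul, Ds, Cs, coeff_mk, d_succ]
      ring
  have e3 : (Ks - Us * Ds) * (1 - X * (2 * Cs)) = 0 := by
    have : (Ks - Us * Ds) * (1 - X * (2 * Cs)) =
      (Ks - X * (2 * Cs * Ks + Us * Cs)) - Us * (Ds - X * (2 * Cs * Ds + Cs)) := by ring
    rw [this, ← e1, ← e2]; ring
  have e4 : (1 - X * (2 * Cs)) ≠ 0 := by
    intro h
    have := congrArg constantCoeff h
    simp at this
  have e5 : Ks = Us * Ds := by
    have := (mul_eq_zero.1 e3).resolve_right e4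
    linear_combination this
  have := congrArg (coeff n) e5
  simpa only [coeff_mul, Ks, Us, Ds, coeff_mk] using this

def st (g : ℕ) : ℕ := if g < 4 then g else 4 + g % 4

def comb (a b : ℕ) : ℕ := st (max (up a) (4 * (up a / 4) + b))

theorem st_node (L R : T) : st (G (.node () L R)) = comb (st (G L)) (st (G R)) := by
  simp only [G, comb]
  generalize G L = a
  generalize G R = b
  unfold st up
  split_ifs <;> omega

theorem st_lt (g : ℕ) : st g < 8 := by
  unfold st; split_ifs <;> omega

open BinaryTree in
noncomputable def x (s n : ℕ) : ℝ := ∑ t ∈ treesOfNumNodesEq n, if st (G t) = s then 1 else 0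

theorem swap4 {α β γ δ : Type} (A : Finset α) (B : Finset β) (C : Finset γ) (D : Finset δ)
    (f : α → β → γ → δ → ℝ) : ∑ a ∈ A, ∑ b ∈ B, ∑ c ∈ C, ∑ e ∈ D, f a b c e =
    ∑ c ∈ C, ∑ e ∈ D, ∑ a ∈ A, ∑ b ∈ B, f a b c e := by
  calc ∑ a ∈ A, ∑ b ∈ B, ∑ c ∈ C, ∑ e ∈ D, f a b c e
      = ∑ a ∈ A, ∑ c ∈ C, ∑ b ∈ B, ∑ e ∈ D, f a b c e :=
        Finset.sum_congr rfl (fun a _ => Finset.sum_comm)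
    _ = ∑ c ∈ C, ∑ a ∈ A, ∑ b ∈ B, ∑ e ∈ D, f a b c e := Finset.sum_comm
    _ = ∑ c ∈ C, ∑ a ∈ A, ∑ e ∈ D, ∑ b ∈ B, f a b c e :=
        Finset.sum_congr rfl (fun c _ => Finset.sum_congr rfl (fun a _ => Finset.sum_comm))
    _ = _ := Finset.sum_congr rfl (fun c _ => Finset.sum_comm)

theorem x_succ (s n : ℕ) : x s (n + 1) = ∑ a ∈ Finset.range 8, ∑ b ∈ Finset.range 8,
    if comb a b = s then
      ∑ p ∈ Finset.HasAntidiagonal.antidiagonal n, x a p.1 * x b p.2 else 0 := by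
  have h1 : ∀ a b : ℕ, (if comb a b = s then
      ∑ p ∈ Finset.HasAntidiagonal.antidiagonal n, x a p.1 * x b p.2 else 0) =
      ∑ p ∈ Finset.HasAntidiagonal.antidiagonal n,
        if comb a b = s then x a p.1 * x b p.2 else 0 := by
    intro a b; split_ifs <;> simp
  simp only [h1]
  rw [Finset.sum_congr rfl (fun a _ => Finset.sum_comm), Finset.sum_comm]
  rw [x, sum_trees_succ]
  apply Finset.sum_congr rfl
  rintro ⟨i, j⟩ _
  simp only [x, Finset.sum_mul_sum]
  have h2 : ∀ a b : ℕ, (if comb a b = s then ∑ L ∈ BinaryTree.treesOfNumNodesEq i,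
      ∑ R ∈ BinaryTree.treesOfNumNodesEq j,
      (if st (G L) = a then (1:ℝ) else 0) * (if st (G R) = b then 1 else 0) else 0) =
      ∑ L ∈ BinaryTree.treesOfNumNodesEq i, ∑ R ∈ BinaryTree.treesOfNumNodesEq j,
      if st (G L) = a then (if st (G R) = b then (if comb a b = s then 1 else 0) else 0) else 0 := by
    intro a b
    split_ifs with h
    · apply Finset.sum_congr rfl; intro L _
      apply Finset.sum_congr rfl; intro R _
      split_ifs <;> simp
    · simp
  simp only [h2]
  rw [swap4]
  apply Finset.sum_congr rfl
  intro L _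
  apply Finset.sum_congr rfl
  intro R _
  rw [Finset.sum_eq_single (st (G L)), Finset.sum_eq_single (st (G R))]
  · simp [st_node]
  · intro b _ hb; simp [hb.symm]
  · intro h; exact absurd (Finset.mem_range.2 (st_lt _)) h
  · intro b _ hb; simp [hb.symm]
  · intro h; exact absurd (Finset.mem_range.2 (st_lt _)) h

noncomputable def c (n : ℕ) : ℝ := catalan n / 4 ^ n

noncomputable def y (s n : ℕ) : ℝ := x s n / 4 ^ n

theorem c_nonneg (n : ℕ) : 0 ≤ c n := by unfold c; positivity

theorem c_partial (N : ℕ) : ∑ n ∈ Finset.range N, c n = 2 - 2 * (N + 1) * c N := by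
  induction N with
  | zero => simp [c]
  | succ N ih =>
    rw [Finset.sum_range_succ, ih]
    have h := cat_rec N
    unfold c
    rw [pow_succ]
    push_cast
    field_simp
    linarith

theorem c_summable : Summable c := by
  apply summable_of_sum_range_le (c := 2) c_nonneg
  intro N
  rw [c_partial]
  have := c_nonneg N
  have : 0 ≤ 2 * ((N : ℝ) + 1) * c N := by positivity
  linarith

theorem x_nonneg (s n : ℕ) : 0 ≤ x s n := by
  unfold x
  apply Finset.sum_nonneg
  intro t _
  split_ifs <;> norm_num

theorem x_le (s n : ℕ) : x s n ≤ catalan n := by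
  rw [← sum_one]
  unfold x
  apply Finset.sum_le_sum
  intro t _
  split_ifs <;> norm_num

theorem y_nonneg (s n : ℕ) : 0 ≤ y s n := by
  have := x_nonneg s n
  unfold y; positivity

theorem y_summable (s : ℕ) : Summable (y s) := by
  apply Summable.of_nonneg_of_le (y_nonneg s) _ c_summable
  intro n
  unfold y c
  have := x_le s n
  gcongr

noncomputable def Z (s : ℕ) : ℝ := ∑' n, y s n

theorem conv_div (f g : ℕ → ℝ) (n : ℕ) :
    (∑ p ∈ Finset.HasAntidiagonal.antidiagonal n, f p.1 * g p.2) / 4 ^ (n + 1) =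
    1 / 4 * ∑ p ∈ Finset.HasAntidiagonal.antidiagonal n, (f p.1 / 4 ^ p.1) * (g p.2 / 4 ^ p.2) := by
  rw [Finset.sum_div, Finset.mul_sum]
  apply Finset.sum_congr rfl
  intro p hp
  rw [← Finset.HasAntidiagonal.mem_antidiagonal.1 hp, pow_succ, pow_add]
  field_simp

theorem conv_hasSum (f g : ℕ → ℝ) (hf : Summable f) (hg : Summable g) (hf0 : ∀ n, 0 ≤ f n)
    (hg0 : ∀ n, 0 ≤ g n) :
    HasSum (fun n => ∑ p ∈ Finset.HasAntidiagonal.antidiagonal n, f p.1 * g p.2)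
      ((∑' n, f n) * ∑' n, g n) := by
  have hp := hf.mul_of_nonneg hg hf0 hg0
  rw [hf.tsum_mul_tsum_eq_tsum_sum_antidiagonal hg hp]
  exact (summable_sum_mul_antidiagonal_of_summable_mul hp).hasSum

theorem c_tsum : ∑' n, c n = 2 := by
  have h := conv_hasSum c c c_summable c_summable c_nonneg c_nonneg
  have h2 : HasSum (fun n => c (n + 1)) (1 / 4 * ((∑' n, c n) * ∑' n, c n)) := by
    have e : (fun n => c (n + 1)) = fun n => 1 / 4 *
        ∑ p ∈ Finset.HasAntidiagonal.antidiagonal n, c p.1 * c p.2 := by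
     funext n
     unfold c
     rw [← conv_div (fun n => (catalan n : ℝ)) (fun n => (catalan n : ℝ)), catalan_succ']
     push_cast; rfl
    rw [e]
    exact h.mul_left (1 / 4)
  have h3 := c_summable.tsum_eq_zero_add
  rw [h2.tsum_eq] at h3
  have h4 : c 0 = 1 := by simp [c]
  rw [h4] at h3
  have : ((∑' n, c n) - 2) ^ 2 = 0 := by linarith
  have := pow_eq_zero_iff (two_ne_zero) |>.1 this
  linarith

theorem Z_eq (s : ℕ) : Z s = (if s = 0 then 1 else 0) +
    1 / 4 * ∑ a ∈ Finset.range 8, ∑ b ∈ Finset.range 8, if comb a b = s then Z a * Z b else 0 := by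
  have h2 : HasSum (fun n => y s (n + 1)) (1 / 4 * ∑ a ∈ Finset.range 8, ∑ b ∈ Finset.range 8,
      if comb a b = s then Z a * Z b else 0) := by
    have : ∀ n, y s (n + 1) = 1 / 4 * ∑ a ∈ Finset.range 8, ∑ b ∈ Finset.range 8,
        if comb a b = s then
          ∑ p ∈ Finset.HasAntidiagonal.antidiagonal n, y a p.1 * y b p.2 else 0 := by
      intro n
      rw [y, x_succ]
      rw [Finset.sum_div, Finset.mul_sum]
      apply Finset.sum_congr rfl; intro a _
      rw [Finset.sum_div, Finset.mul_sum]
      apply Finset.sum_congr rfl; intro b _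
      split_ifs
      · simp only [y]; rw [← conv_div]
      · simp
    simp only [this]
    apply HasSum.mul_left
    apply hasSum_sum; intro a _
    apply hasSum_sum; intro b _
    split_ifs
    · exact conv_hasSum _ _ (y_summable a) (y_summable b) (y_nonneg a) (y_nonneg b)
    · exact hasSum_zero
  have h3 := (y_summable s).tsum_eq_zero_add
  rw [h2.tsum_eq] at h3
  rw [Z, h3]
  congr 1
  rw [y, x, BinaryTree.treesOfNumNodesEq_zero, Finset.sum_singleton]
  have : st (G .nil) = 0 := rfl
  simp only [this, pow_zero, div_one, eq_comm]

theorem Z_total : ∑ s ∈ Finset.range 8, Z s = 2 := by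
  rw [← c_tsum]
  unfold Z
  rw [← Summable.tsum_finsetSum (fun s _ => y_summable s)]
  congr 1
  ext n
  simp only [y, c, ← Finset.sum_div]
  congr 1
  simp only [x]
  rw [Finset.sum_comm, ← sum_one]
  apply Finset.sum_congr rfl
  intro t _
  simp [st_lt]

theorem comb_tab :
    comb 0 0 = 1 ∧ comb 0 1 = 1 ∧ comb 0 2 = 2 ∧ comb 0 3 = 3 ∧ comb 0 4 = 4 ∧ comb 0 5 = 5 ∧ comb 0 6 = 6 ∧ comb 0 7 = 7 ∧
    comb 1 0 = 2 ∧ comb 1 1 = 2 ∧ comb 1 2 = 2 ∧ comb 1 3 = 3 ∧ comb 1 4 = 4 ∧ comb 1 5 = 5 ∧ comb 1 6 = 6 ∧ comb 1 7 = 7 ∧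
    comb 2 0 = 3 ∧ comb 2 1 = 3 ∧ comb 2 2 = 3 ∧ comb 2 3 = 3 ∧ comb 2 4 = 4 ∧ comb 2 5 = 5 ∧ comb 2 6 = 6 ∧ comb 2 7 = 7 ∧
    comb 3 0 = 4 ∧ comb 3 1 = 5 ∧ comb 3 2 = 6 ∧ comb 3 3 = 7 ∧ comb 3 4 = 4 ∧ comb 3 5 = 5 ∧ comb 3 6 = 6 ∧ comb 3 7 = 7 ∧
    comb 4 0 = 4 ∧ comb 4 1 = 5 ∧ comb 4 2 = 6 ∧ comb 4 3 = 7 ∧ comb 4 4 = 4 ∧ comb 4 5 = 5 ∧ comb 4 6 = 6 ∧ comb 4 7 = 7 ∧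
    comb 5 0 = 6 ∧ comb 5 1 = 6 ∧ comb 5 2 = 6 ∧ comb 5 3 = 7 ∧ comb 5 4 = 4 ∧ comb 5 5 = 5 ∧ comb 5 6 = 6 ∧ comb 5 7 = 7 ∧
    comb 6 0 = 7 ∧ comb 6 1 = 7 ∧ comb 6 2 = 7 ∧ comb 6 3 = 7 ∧ comb 6 4 = 4 ∧ comb 6 5 = 5 ∧ comb 6 6 = 6 ∧ comb 6 7 = 7 ∧
    comb 7 0 = 4 ∧ comb 7 1 = 5 ∧ comb 7 2 = 6 ∧ comb 7 3 = 7 ∧ comb 7 4 = 4 ∧ comb 7 5 = 5 ∧ comb 7 6 = 6 ∧ comb 7 7 = 7 := by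
  decide

theorem Z_val : Z 3 + Z 7 = 2 / 11 := by
  have hT := Z_total
  have h0 := Z_eq 0
  have h1 := Z_eq 1
  have h2 := Z_eq 2
  have h3 := Z_eq 3
  have h4 := Z_eq 4
  have h5 := Z_eq 5
  have h6 := Z_eq 6
  have h7 := Z_eq 7
  simp only [Finset.sum_range_succ, Finset.sum_range_zero, comb_tab] at hT h0 h1 h2 h3 h4 h5 h6 h7
  norm_num at hT h0 h1 h2 h3 h4 h5 h6 h7
  rw [h0] at hT h1 h2 h3 h4 h5 h6 h7
  have e1 : Z 1 = 1 / 3 := by linarith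
  rw [e1] at hT h2 h3 h4 h5 h6 h7
  have e2 : Z 2 = 1 / 6 := by linarith
  rw [e2] at hT h3 h4 h5 h6 h7
  have e3 : Z 3 = 1 / 10 := by linarith
  rw [e3] at hT h4 h5 h6 h7 ⊢
  have g4 : Z 4 = 1 / 4 * (2 * Z 4 + (1 / 10 + Z 4 + Z 7)) := by
    linear_combination h4 + 1 / 4 * Z 4 * hT
  have g5 : Z 5 = 1 / 4 * (2 * Z 5 + (1 / 10 + Z 4 + Z 7) * (1 / 3)) := by
    linear_combination h5 + 1 / 4 * Z 5 * hT
  have g6 : Z 6 = 1 / 4 * (2 * Z 6 + (1 / 10 + Z 4 + Z 7) * (1 / 6) + Z 5 * (3 / 2)) := by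
    linear_combination h6 + 1 / 4 * Z 6 * hT
  linarith

theorem u_eq (n : ℕ) : u n = x 3 n + x 7 n := by
  unfold u x
  rw [← Finset.sum_add_distrib]
  apply Finset.sum_congr rfl
  intro t _
  generalize G t = g
  unfold st
  split_ifs <;> first | omega | norm_num

theorem u_nonneg (n : ℕ) : 0 ≤ u n := by
  rw [u_eq]; exact add_nonneg (x_nonneg _ _) (x_nonneg _ _)

theorem u_le (n : ℕ) : u n ≤ catalan n := by
  rw [← sum_one]
  unfold u
  apply Finset.sum_le_sum
  intro t _
  split_ifs <;> norm_num

theorem u_hasSum : HasSum (fun n => u n * (1 / 2 / 4 ^ n)) (1 / 11) := by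
  have h := (((y_summable 3).hasSum).add ((y_summable 7).hasSum)).mul_left (1 / 2)
  have e : 1 / 2 * (∑' n, y 3 n + ∑' n, y 7 n) = 1 / 11 := by
    have := Z_val
    unfold Z at this
    rw [this]; norm_num
  rw [e] at h
  have e2 : (fun n => u n * (1 / 2 / 4 ^ n)) = fun n => 1 / 2 * (y 3 n + y 7 n) := by
    funext n; rw [u_eq, y, y]; ring
  rw [e2]; exact h

theorem cu_hasSum : HasSum (fun n => ((catalan n : ℝ) - u n) * (1 / 2 / 4 ^ n)) (10 / 11) := by
  have h := ((c_summable.hasSum).mul_left (1 / 2)).sub u_hasSum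
  rw [c_tsum] at h
  have e : (1 / 2 * 2 - 1 / 11 : ℝ) = 10 / 11 := by norm_num
  rw [e] at h
  have e2 : (fun n => ((catalan n : ℝ) - u n) * (1 / 2 / 4 ^ n)) =
      fun n => 1 / 2 * c n - u n * (1 / 2 / 4 ^ n) := by
    funext n; rw [c]; ring
  rw [e2]; exact h

noncomputable def r (n i : ℕ) : ℝ := d (n - i) / (n * catalan n)

theorem d_nonneg (n : ℕ) : 0 ≤ d n := by
  unfold d; split_ifs <;> positivity

theorem r_nonneg (n i : ℕ) : 0 ≤ r n i := by
  have := d_nonneg (n - i)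
  unfold r; positivity

theorem cat_pos (n : ℕ) : (0 : ℝ) < catalan n := by
  have h := succ_mul_catalan_eq_centralBinom n
  have h2 := Nat.centralBinom_pos n
  have : 0 < catalan n := by
    rw [← h] at h2
    exact Nat.pos_of_mul_pos_left h2
  exact_mod_cast this

open Filter Topology

theorem inv_tendsto : Tendsto (fun n : ℕ => ((n : ℝ))⁻¹) atTop (𝓝 0) :=
  tendsto_inv_atTop_zero.comp tendsto_natCast_atTop_atTop

theorem ratio_tendsto : Tendsto (fun m : ℕ => ((m : ℝ) * catalan m) /
    (((m + 1 : ℕ) : ℝ) * catalan (m + 1))) atTop (𝓝 (1 / 4)) := by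
  have h := inv_tendsto
  have h1 : Tendsto (fun m : ℕ => (1 + 2 * ((m : ℝ))⁻¹) /
      (2 * (1 + ((m : ℝ))⁻¹) * (2 + ((m : ℝ))⁻¹))) atTop
      (𝓝 ((1 + 2 * 0) / (2 * (1 + 0) * (2 + 0)))) := by
    apply Tendsto.div
    · exact tendsto_const_nhds.add (h.const_mul 2)
    · exact ((tendsto_const_nhds.add h).const_mul 2).mul (tendsto_const_nhds.add h)
    · norm_num
  have e : ((1 + 2 * 0) / (2 * (1 + 0) * (2 + 0)) : ℝ) = 1 / 4 := by norm_num
  rw [e] at h1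
  refine h1.congr' ?_
  filter_upwards [eventually_gt_atTop 0] with m hm
  have hm' : (0 : ℝ) < m := by exact_mod_cast hm
  have h2 := cat_rec m
  have h3 := cat_pos m
  have h4 := cat_pos (m + 1)
  have h5 : (catalan m : ℝ) = ((m : ℝ) + 2) * catalan (m + 1) / (2 * (2 * m + 1)) := by
    field_simp; linarith
  rw [h5]
  push_cast
  field_simp

theorem r_tendsto (i : ℕ) : Tendsto (fun n => r n i) atTop (𝓝 (1 / 2 / 4 ^ i)) := by
  rw [← tendsto_add_atTop_iff_nat i]
  simp only [r, Nat.add_sub_cancel]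
  induction i with
  | zero =>
    have h : Tendsto (fun m : ℕ => (1 + ((m : ℝ))⁻¹) / 2) atTop (𝓝 ((1 + 0) / 2)) :=
      (tendsto_const_nhds.add inv_tendsto).div_const 2
    have e : ((1 + 0) / 2 : ℝ) = 1 / 2 / 4 ^ 0 := by norm_num
    rw [e] at h
    refine h.congr' ?_
    filter_upwards [eventually_gt_atTop 0] with m hm
    have hm' : (0 : ℝ) < m := by exact_mod_cast hm
    have h3 := cat_pos m
    simp only [d, hm.ne', if_false, add_zero]
    field_simp
  | succ i ih =>
    have h := ih.mul ((tendsto_add_atTop_iff_nat i).2 ratio_tendsto)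
    have e : (1 / 2 / 4 ^ i * (1 / 4) : ℝ) = 1 / 2 / 4 ^ (i + 1) := by
      rw [pow_succ]; field_simp
    rw [e] at h
    refine h.congr' ?_
    filter_upwards [eventually_gt_atTop 0] with m hm
    have hm' : (0 : ℝ) < ((m + i : ℕ) : ℝ) := by exact_mod_cast (by omega)
    have h3 := cat_pos (m + i)
    have h4 := cat_pos (m + i + 1)
    have h5 : (0 : ℝ) < ((m + i + 1 : ℕ) : ℝ) := by positivity
    rw [← add_assoc]
    field_simp

theorem fatou (f : ℕ → ℝ) (q a : ℝ) (hf : ∀ n, 0 ≤ f n)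
    (hs : HasSum (fun n => f n * (1 / 2 / 4 ^ n)) q) (ha : a < q) :
    ∀ᶠ n in atTop, a < ∑ i ∈ Finset.range (n + 1), f i * r n i := by
  obtain ⟨N, hN⟩ := (hs.tendsto_sum_nat.eventually (lt_mem_nhds ha)).exists
  have h1 : Tendsto (fun n => ∑ i ∈ Finset.range N, f i * r n i) atTop
      (𝓝 (∑ i ∈ Finset.range N, f i * (1 / 2 / 4 ^ i))) :=
    tendsto_finsetSum _ (fun i _ => (r_tendsto i).const_mul _)
  filter_upwards [h1.eventually (lt_mem_nhds hN), eventually_ge_atTop N] with n hn hn2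
  refine hn.trans_le ?_
  apply Finset.sum_le_sum_of_subset_of_nonneg
  · intro i hi; rw [Finset.mem_range] at *; omega
  · intro i _ _; exact mul_nonneg (hf i) (r_nonneg n i)

theorem conv_r (f : ℕ → ℝ) (n : ℕ) :
    ∑ i ∈ Finset.range (n + 1), f i * r n i =
    (∑ p ∈ Finset.HasAntidiagonal.antidiagonal n, f p.1 * d p.2) / (n * catalan n) := by
  rw [Finset.Nat.sum_antidiagonal_eq_sum_range_succ_mk, Finset.sum_div]
  apply Finset.sum_congr rfl
  intro i _
  simp only [r]; ring

theorem K_tendsto : Tendsto (fun n : ℕ => K n / (n * catalan n)) atTop (𝓝 (1 / 11)) := by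
  rw [tendsto_order]
  constructor
  · intro a ha
    filter_upwards [fatou u _ a u_nonneg u_hasSum ha] with n hn
    rwa [conv_r, ← K_eq] at hn
  · intro a ha
    have h := fatou (fun n => (catalan n : ℝ) - u n) _ (1 - a)
      (fun n => sub_nonneg.2 (u_le n)) cu_hasSum (by linarith)
    filter_upwards [h, eventually_gt_atTop 0] with n hn hn0
    rw [conv_r] at hn
    simp only [sub_mul, Finset.sum_sub_distrib] at hn
    rw [← K_eq, d_total, sub_div, div_self] at hn
    · linarith
    · have := cat_pos n
      have : (0 : ℝ) < n := by exact_mod_cast hn0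
      positivity

theorem G_K (n : ℕ) : 4 * K n ≤ ∑ t ∈ BinaryTree.treesOfNumNodesEq n, (G t : ℝ) ∧
    ∑ t ∈ BinaryTree.treesOfNumNodesEq n, (G t : ℝ) ≤ 4 * K n + 3 * catalan n := by
  rw [← sum_one, K, Finset.mul_sum, Finset.mul_sum, ← Finset.sum_add_distrib]
  constructor
  · apply Finset.sum_le_sum
    intro t _
    have : 4 * kap t ≤ G t := by rw [← G_div]; omega
    exact_mod_cast this
  · apply Finset.sum_le_sum
    intro t _
    have : G t ≤ 4 * kap t + 3 * 1 := by rw [← G_div]; omega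
    exact_mod_cast this

end UUUD

open Filter Classical in
/-- The expectation of `L^{UUUD}` under the uniform measure on `S_n(132)` is `∼ (4/11)n`. -/
theorem expectation_LUUUD_asymptotic :
    Tendsto (fun n : ℕ =>
      (∑ σ ∈ Finset.univ.filter (fun σ : Equiv.Perm (Fin n) => Avoids132 σ), (LUUUD σ : ℝ)) /
        ((catalan n : ℝ) * (n : ℝ)))
      atTop (nhds (4 / 11)) := by
  have h1 := UUUD.K_tendsto.const_mul 4
  have h2 := UUUD.inv_tendsto.const_mul 5
  have hlo := h1.sub h2
  have hhi := h1.add h2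
  have e1 : (4 * (1 / 11) - 5 * 0 : ℝ) = 4 / 11 := by norm_num
  have e2 : (4 * (1 / 11) + 5 * 0 : ℝ) = 4 / 11 := by norm_num
  rw [e1] at hlo
  rw [e2] at hhi
  refine tendsto_of_tendsto_of_tendsto_of_le_of_le' hlo hhi ?_ ?_
  · filter_upwards [eventually_gt_atTop 0] with n hn
    have hc := UUUD.cat_pos n
    have hn' : (0 : ℝ) < n := by exact_mod_cast hn
    have a1 := (UUUD.sum_transfer n).2
    have a2 := (UUUD.G_K n).1
    rw [le_div_iff₀ (by positivity)]
    have : (4 * (UUUD.K n / (n * catalan n)) - 5 * (n : ℝ)⁻¹) * (catalan n * n) =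
      4 * UUUD.K n - 5 * catalan n := by field_simp
    rw [this]
    linarith
  · filter_upwards [eventually_gt_atTop 0] with n hn
    have hc := UUUD.cat_pos n
    have hn' : (0 : ℝ) < n := by exact_mod_cast hn
    have a1 := (UUUD.sum_transfer n).1
    have a2 := (UUUD.G_K n).2
    rw [div_le_iff₀ (by positivity)]
    have : (4 * (UUUD.K n / (n * catalan n)) + 5 * (n : ℝ)⁻¹) * (catalan n * n) =
      4 * UUUD.K n + 5 * catalan n := by field_simp
    rw [this]
    linarith
end

section
/- The generating function B(t) = Σ_{n≥0} C_n·b_n·t^n, where b_n is the expected number of complete UUD blocks in a longest (UUD)-repeating subsequence of a uniformly random 132-avoiding permutation of [n], satisfies B(t) = t²(C(t)-1)² / [((1-t)(1-2tC(t))+t)(1-t-tC(t)) - t²(C(t)-1)], where C(t) is the Catalan generating function. -/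
/-- The number of complete `UUD` blocks in a longest `UUD`-repeating subsequence;
in `ℕ`-arithmetic `(L - 1)/3` equals `k` when `L = 3k+1` and `0` when `L = 0`. -/
noncomputable def BUUD {n : ℕ} (σ : Equiv.Perm (Fin n)) : ℕ := (LUUD σ - 1) / 3

namespace UUD

open BinaryTree

abbrev BT := BinaryTree Unit

/-- length of a longest chain in `L n`, given the length of a longest one in `L`. -/
def ext (a : ℕ) : ℕ := if a = 0 ∨ a % 3 ≠ 0 then a + 1 else a

/-- Length of a longest subsequence following a prefix of `UUDUUD...`. -/
def ell : BT → ℕ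
  | .nil => 0
  | .node _ l r => 3 * (ext (ell l) / 3) + max (ext (ell l) % 3) (ell r)

/-! ### generating functions over trees -/

/-- the equivalence behind the recursive decomposition -/
def optEquiv : Option (BT × BT) ≃ BT where
  toFun o := match o with
    | none => .nil
    | some p => .node () p.1 p.2
  invFun T := match T with
    | .nil => none
    | .node _ l r => some (l, r)
  left_inv o := by cases o <;> rfl
  right_inv T := by cases T <;> rfl

theorem hasSum_node {g : BT → ℝ} {s t : ℝ}
    (h : HasSum (fun p : BT × BT => g (.node () p.1 p.2) *
      (t ^ p.1.numNodes * t ^ p.2.numNodes)) s) :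
    HasSum (fun T : BT => g T * t ^ T.numNodes) (g .nil + t * s) := by
  rw [← optEquiv.hasSum_iff]
  have h2 := h.mul_left t
  have h3 : HasSum (fun o : Option (BT × BT) => match o with
     | none => 0
     | some p => t * (g (.node () p.1 p.2) * (t ^ p.1.numNodes * t ^ p.2.numNodes))) (t * s) := by
    rw [← (Option.some_injective (BT × BT)).hasSum_iff]
    · exact h2
    · intro x hx
      cases x with
      | none => rfl
      | some p => exact absurd ⟨p, rfl⟩ hx
  have h4 : HasSum (fun o : Option (BT × BT) => if o = none then g .nil else 0) (g .nil) := by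
    exact hasSum_ite_eq none (g .nil)
  convert h4.add h3 using 1
  funext o
  cases o with
  | none => simp [optEquiv]
  | some p => simp [optEquiv]; ring

theorem hasSum_mulW {u v : BT → ℝ} {a b t : ℝ}
    (hu : HasSum (fun T : BT => u T * t ^ T.numNodes) a)
    (hv : HasSum (fun T : BT => v T * t ^ T.numNodes) b) :
    HasSum (fun p : BT × BT => (u p.1 * v p.2) *
      (t ^ p.1.numNodes * t ^ p.2.numNodes)) (a * b) := by
  have := hu.mul hv (summable_mul_of_summable_norm hu.summable.norm hv.summable.norm)
  convert! this using 1
  funext p; ring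

theorem fiber {f : BT → ℝ} (n : ℕ) :
    HasSum (fun T : {T : BT // T.numNodes = n} => f T) (∑ T ∈ treesOfNumNodesEq n, f T) := by
  have e : {T : BT // T.numNodes = n} = {T : BT // T ∈ treesOfNumNodesEq n} := by
    simp [mem_treesOfNumNodesEq]
  have := (treesOfNumNodesEq n).hasSum f
  have h2 := (Equiv.subtypeEquivRight
    (fun T : BT => (mem_treesOfNumNodesEq (x := T) (n := n)).symm)).hasSum_iff.2 this
  exact h2

theorem summable_weight {t : ℝ} (ht0 : 0 < t) (ht : t < 1 / 4) :
    Summable (fun T : BT => ((T.numNodes : ℝ) + 1) * t ^ T.numNodes) := by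
  rw [← (Equiv.sigmaFiberEquiv (fun T : BT => T.numNodes)).summable_iff]
  rw [summable_sigma_of_nonneg (fun x => by simp only [Function.comp]; positivity)]
  have key : ∀ n : ℕ, HasSum (fun T : {T : BT // T.numNodes = n} =>
      (((T : BT).numNodes : ℝ) + 1) * t ^ (T : BT).numNodes) ((n.centralBinom : ℝ) * t ^ n) := by
    intro n
    have := fiber (f := fun T : BT => ((T.numNodes : ℝ) + 1) * t ^ T.numNodes) n
    convert this using 1
    rw [Finset.sum_congr rfl (g := fun _ => ((n : ℝ) + 1) * t ^ n)]
    · rw [Finset.sum_const, treesOfNumNodesEq_card_eq_catalan,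
        ← succ_mul_catalan_eq_centralBinom]
      simp; ring
    · intro T hT
      rw [mem_treesOfNumNodesEq] at hT
      simp [hT]
  constructor
  · intro n
    exact (key n).summable
  · have : Summable (fun n : ℕ => (n.centralBinom : ℝ) * t ^ n) := by
      refine Summable.of_nonneg_of_le (fun n => by positivity) (fun n => ?_)
        (summable_geometric_of_lt_one (r := 4 * t) (by linarith) (by linarith))
      rw [mul_pow]
      gcongr
      exact_mod_cast Nat.centralBinom_le_four_pow n
    convert this using 1
    funext n
    exact (key n).tsum_eq

theorem summable_of_bound {t : ℝ} (ht0 : 0 < t) (ht : t < 1 / 4) {g : BT → ℝ}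
    (hg : ∀ T, |g T| ≤ T.numNodes + 1) : Summable (fun T : BT => g T * t ^ T.numNodes) := by
  refine Summable.of_norm_bounded (summable_weight ht0 ht) (fun T => ?_)
  rw [Real.norm_eq_abs, abs_mul, abs_of_nonneg (pow_nonneg ht0.le _)]
  gcongr
  exact hg T

theorem ell_le (T : BT) : ell T ≤ T.numNodes := by
  induction T with
  | nil => simp [ell]
  | node _ l r hl hr =>
    simp only [ell, numNodes]
    have : ext (ell l) ≤ ell l + 1 := by unfold ext; split_ifs <;> omega
    omega

theorem ell_pos (T : BT) : ell T = 0 ↔ T = .nil := by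
  cases T with
  | nil => simp [ell]
  | node _ l r =>
    simp only [ell, ext, reduceCtorEq, iff_false]
    split_ifs <;> omega

def dl (T : BT) : ℝ := if ell T = 0 then 1 else 0
def s1 (T : BT) : ℝ := if ell T = 1 then 1 else 0
def c1 (T : BT) : ℝ := if ell T % 3 = 1 then 1 else 0
def c2 (T : BT) : ℝ := if ell T % 3 = 2 then 1 else 0
def qq (T : BT) : ℝ := ((ell T / 3 : ℕ) : ℝ)

theorem s1_node (l r : BT) : s1 (.node () l r) = dl l * dl r + dl l * s1 r := by
  simp only [s1, dl, ell, ext]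
  split_ifs <;> first | omega | simp
theorem c1_node (l r : BT) : c1 (.node () l r) = 1 * c1 r + dl l * dl r - c1 l * s1 r := by
  simp only [s1, dl, c1, ell, ext]
  split_ifs <;> first | omega | simp
theorem c2_node (l r : BT) : c2 (.node () l r) = 1 * c2 r + c1 l * dl r + c1 l * s1 r := by
  simp only [s1, dl, c1, c2, ell, ext]
  split_ifs <;> first | omega | simp
theorem qq_node (l r : BT) : qq (.node () l r) = qq l * 1 + c2 l * 1 + 1 * qq r := by
  have h : ell (.node () l r) / 3 = ell l / 3 + (if ell l % 3 = 2 then 1 else 0) + ell r / 3 := by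
    simp only [ell, ext]
    split_ifs <;> omega
  simp only [qq, c2, h]
  push_cast
  split_ifs <;> simp

theorem final_alg {t C : ℝ} (ht : t = t * C * (1 - t * C)) (hC : C = 1 + t * C ^ 2)
    (h0 : 0 < t * C) (h1 : 0 < 1 - 2 * (t * C)) {S R1 R2 Q : ℝ}
    (hS : S = t * (1 + S)) (hR1 : R1 = t * (C * R1 + 1 - R1 * S))
    (hR2 : R2 = t * (C * R2 + R1 + R1 * S)) (hQ : Q = t * (Q * C + R2 * C + C * Q)) :
    Q - C + 1 + R1 + R2 = t ^ 2 * (C - 1) ^ 2 /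
        (((1 - t) * (1 - 2 * t * C) + t) * (1 - t - t * C) - t ^ 2 * (C - 1)) := by
  obtain ⟨c, hc⟩ : ∃ c, c = t * C := ⟨_, rfl⟩
  rw [← hc] at h0 h1
  have htc : t = c * (1 - c) := by rw [hc]; exact ht
  have h1c : 0 < 1 - c := by linarith
  have hCc : C = 1 / (1 - c) := by
    rw [eq_div_iff h1c.ne', hc]; linarith
  have hP : 0 < 1 - c + 2 * c ^ 2 - c ^ 3 := by nlinarith [sq_nonneg c, mul_pos h0 h0]
  have ht1 : 0 < 1 - t := by nlinarith
  have hS' : S = t / (1 - t) := by rw [eq_div_iff ht1.ne']; linarith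
  have hR1' : R1 = t * (1 - t) / ((1 - c) * (1 - c + 2 * c ^ 2 - c ^ 3)) := by
    rw [eq_div_iff (by positivity)]
    rw [hS'] at hR1
    field_simp at hR1
    have e : t * C = c := hc.symm
    have : R1 * ((1 - t) * (1 - c) + t ^ 2) = t * (1 - t) := by
      rw [← e]; linear_combination hR1
    rw [← this, htc]; ring
  have hR2' : R2 = t * R1 / ((1 - t) * (1 - c)) := by
    rw [eq_div_iff (by positivity)]
    rw [hS'] at hR2
    field_simp at hR2
    have e : t * C = c := hc.symm
    rw [← e]; linear_combination hR2
  have hQ' : Q = c * R2 / (1 - 2 * c) := by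
    rw [eq_div_iff (by positivity), hc]; linear_combination hQ
  have hD : ((1 - t) * (1 - 2 * t * C) + t) * (1 - t - t * C) - t ^ 2 * (C - 1)
      = (1 - c) * (1 - 2 * c) * (1 - c + 2 * c ^ 2 - c ^ 3) := by
    have e : t * C = c := hc.symm
    have e2 : ((1 - t) * (1 - 2 * t * C) + t) * (1 - t - t * C) - t ^ 2 * (C - 1)
      = ((1 - t) * (1 - 2 * (t * C)) + t) * (1 - t - t * C) - t * (t * C) + t ^ 2 := by ring
    rw [e2, e, htc]; ring
  have hN : t ^ 2 * (C - 1) ^ 2 = c ^ 4 := by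
    have : t ^ 2 * (C - 1) ^ 2 = (t * C - t) ^ 2 := by ring
    rw [this, ← hc, htc]; ring
  obtain ⟨P, hPe⟩ : ∃ P, P = 1 - c + 2 * c ^ 2 - c ^ 3 := ⟨_, rfl⟩
  rw [← hPe] at hP hD hR1'
  have n1 := h1.ne'
  have n2 := h1c.ne'
  have n3 := hP.ne'
  have n4 := ht1.ne'
  have k1 : R1 = c * (1 - c + c ^ 2) / P := by
    rw [hR1', htc]; field_simp; ring
  have k2 : R2 = c ^ 2 / P := by
    rw [hR2', hR1']; field_simp; rw [htc]; ring
  obtain ⟨d, hd⟩ : ∃ d, d = 1 - 2 * c := ⟨_, rfl⟩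
  rw [hD, hN, hQ', k2, k1, hCc, ← hd]
  rw [← hd] at n1
  field_simp
  rw [hPe, hd]
  ring

theorem tree_gf (t : ℝ) (ht0 : 0 < t) (ht : t < 1 / 4) :
    HasSum (fun n : ℕ => ((∑ T ∈ treesOfNumNodesEq n, (ell T - 1) / 3 : ℕ) : ℝ) * t ^ n)
      (let C := (1 - Real.sqrt (1 - 4 * t)) / (2 * t)
       t ^ 2 * (C - 1) ^ 2 /
        (((1 - t) * (1 - 2 * t * C) + t) * (1 - t - t * C) - t ^ 2 * (C - 1))) := by
  have ind : ∀ (P : Prop) [Decidable P] (T : BT),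
      |(if P then (1 : ℝ) else 0)| ≤ (T.numNodes : ℝ) + 1 := by
    intro P _ T
    split_ifs
    · simp
    · simp; positivity
  have sm := fun (g : BT → ℝ) hg => (summable_of_bound ht0 ht (g := g) hg).hasSum
  have hC := sm (fun _ => 1) (fun T => by simp)
  have hK := sm (fun T => T.numNodes + 1) (fun T => by rw [abs_of_nonneg (by positivity)])
  have hs1 := sm s1 (fun T => ind _ T)
  have hc1 := sm c1 (fun T => ind _ T)
  have hc2 := sm c2 (fun T => ind _ T)
  have hq := sm qq (fun T => by
    rw [qq, abs_of_nonneg (by positivity)]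
    have := ell_le T
    exact_mod_cast (by omega : ell T / 3 ≤ T.numNodes + 1))
  have hdl : HasSum (fun T : BT => dl T * t ^ T.numNodes) 1 := by
    convert hasSum_ite_eq (BinaryTree.nil : BT) (1 : ℝ) using 1
    funext T
    simp only [dl, ell_pos]
    split_ifs with h
    · simp [h]
    · simp
  generalize (∑' T : BT, (1 : ℝ) * t ^ T.numNodes) = C at hC
  generalize (∑' T : BT, ((T.numNodes : ℝ) + 1) * t ^ T.numNodes) = K at hK
  generalize (∑' T : BT, s1 T * t ^ T.numNodes) = S at hs1
  generalize (∑' T : BT, c1 T * t ^ T.numNodes) = R1 at hc1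
  generalize (∑' T : BT, c2 T * t ^ T.numNodes) = R2 at hc2
  generalize (∑' T : BT, qq T * t ^ T.numNodes) = Q at hq
  have eC : C = 1 + t * (C * C) := by
    refine hC.unique (hasSum_node (g := fun _ => 1) ?_)
    simpa using hasSum_mulW hC hC
  have eK : K = 1 + t * (K * C + C * K) := by
    have := hasSum_node (g := fun T : BT => (T.numNodes : ℝ) + 1) (t := t) (s := K * C + C * K) (by
      convert (hasSum_mulW hK hC).add (hasSum_mulW hC hK) using 1
      funext p
      simp only [numNodes]; push_cast; ring)
    have := hK.unique this
    simpa using this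
  have eS : S = t * (1 * 1 + 1 * S) := by
    have := hasSum_node (g := s1) (t := t) (s := 1 * 1 + 1 * S) (by
      convert (hasSum_mulW hdl hdl).add (hasSum_mulW hdl hs1) using 1
      funext p
      rw [s1_node]; ring)
    have := hs1.unique this
    simpa [s1, ell] using this
  have eR1 : R1 = t * (C * R1 + 1 * 1 - R1 * S) := by
    have := hasSum_node (g := c1) (t := t) (s := C * R1 + 1 * 1 - R1 * S) (by
      convert! ((hasSum_mulW hC hc1).add (hasSum_mulW hdl hdl)).sub (hasSum_mulW hc1 hs1) using 1
      funext p
      rw [c1_node]; ring)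
    have := hc1.unique this
    simpa [c1, ell] using this
  have eR2 : R2 = t * (C * R2 + R1 * 1 + R1 * S) := by
    have := hasSum_node (g := c2) (t := t) (s := C * R2 + R1 * 1 + R1 * S) (by
      convert ((hasSum_mulW hC hc2).add (hasSum_mulW hc1 hdl)).add (hasSum_mulW hc1 hs1) using 1
      funext p
      rw [c2_node]; ring)
    have := hc2.unique this
    simpa [c2, ell] using this
  have eQ : Q = t * (Q * C + R2 * C + C * Q) := by
    have := hasSum_node (g := qq) (t := t) (s := Q * C + R2 * C + C * Q) (by
      convert ((hasSum_mulW hq hC).add (hasSum_mulW hc2 hC)).add (hasSum_mulW hC hq) using 1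
      funext p
      rw [qq_node]; ring)
    have := hq.unique this
    simpa [qq, ell] using this
  have hK0 : 0 ≤ K := hK.nonneg (fun T => by positivity)
  have hC0 : 0 ≤ C := hC.nonneg (fun T => by positivity)
  have hCpos : 0 < C := by rw [eC]; positivity
  have h1 : 0 < 1 - 2 * (t * C) := by
    have : K * (1 - 2 * (t * C)) = 1 := by linear_combination eK
    by_contra hcon
    push Not at hcon
    nlinarith [mul_nonneg hK0 (neg_nonneg.2 hcon)]
  have hval : (1 - Real.sqrt (1 - 4 * t)) / (2 * t) = C := by
    have : Real.sqrt (1 - 4 * t) = 1 - 2 * (t * C) := by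
      rw [Real.sqrt_eq_iff_mul_self_eq (by linarith) h1.le]
      linear_combination (4 * t) * eC
    rw [this]; field_simp; ring
  have hB : HasSum (fun T : BT => (((ell T - 1) / 3 : ℕ) : ℝ) * t ^ T.numNodes)
      (Q - C + 1 + R1 + R2) := by
    convert! (((hq.sub hC).add hdl).add hc1).add hc2 using 1
    funext T
    have : (((ell T - 1) / 3 : ℕ) : ℝ) = qq T - 1 + dl T + c1 T + c2 T := by
      simp only [qq, dl, c1, c2]
      obtain h | h : (ell T = 0 ∨ ell T % 3 ≠ 0) ∨ (ell T ≠ 0 ∧ ell T % 3 = 0) := by omega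
      · have : (ell T - 1) / 3 = ell T / 3 := by omega
        rw [this]
        split_ifs <;> first | omega | simp
      · have : ell T / 3 = (ell T - 1) / 3 + 1 := by omega
        rw [this]
        push_cast
        split_ifs <;> first | omega | simp
    rw [this]; ring
  show HasSum _ (t ^ 2 * ((1 - Real.sqrt (1 - 4 * t)) / (2 * t) - 1) ^ 2 / _)
  rw [hval, ← final_alg (t := t) (C := C) (by linear_combination (-t) * eC) (by linear_combination eC) (by positivity) h1
    (S := S) (R1 := R1) (R2 := R2) (Q := Q) (by linear_combination eS)
    (by linear_combination eR1) (by linear_combination eR2) eQ]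
  have h2 := ((Equiv.sigmaFiberEquiv (fun T : BT => T.numNodes)).hasSum_iff.2 hB).sigma
    (fun n => fiber (f := fun T : BT => (((ell T - 1) / 3 : ℕ) : ℝ) * t ^ T.numNodes) n)
  convert h2 using 1
  funext n
  push_cast
  rw [Finset.sum_mul]
  refine Finset.sum_congr rfl (fun T hT => ?_)
  rw [mem_treesOfNumNodesEq] at hT
  rw [hT]

open scoped List

/-! ### words of trees -/

/-- The 132-avoiding word on `k, ..., k + |T| - 1` encoded by `T`. -/
def word : BT → ℕ → List ℕ
  | .nil, _ => []
  | .node _ l r, k => word l (k + r.numNodes) ++ (k + l.numNodes + r.numNodes) :: word r k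

theorem length_word (T : BT) (k : ℕ) : (word T k).length = T.numNodes := by
  induction T generalizing k with
  | nil => rfl
  | node _ l r hl hr => simp [word, hl, hr]; omega

theorem mem_word (T : BT) (k x : ℕ) : x ∈ word T k ↔ k ≤ x ∧ x < k + T.numNodes := by
  induction T generalizing k with
  | nil => simp [word]
  | node _ l r hl hr => simp [word, hl, hr]; omega

theorem nodup_word (T : BT) (k : ℕ) : (word T k).Nodup := by
  induction T generalizing k with
  | nil => simp [word]
  | node _ l r hl hr =>
    rw [word, List.nodup_append, List.nodup_cons]
    refine ⟨hl _, ⟨?_, hr _⟩, ?_⟩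
    · rw [mem_word]; omega
    · intro a ha b hb
      rw [List.mem_cons] at hb
      simp only [mem_word] at ha hb
      omega

/-- 132-avoidance for lists -/
def Av (w : List ℕ) : Prop := ∀ a b c : ℕ, [a, b, c] <+ w → a < c → c < b → False

theorem av_word (T : BT) (k : ℕ) : Av (word T k) := by
  induction T generalizing k with
  | nil => intro a b c h; simp [word] at h
  | node _ l r hl hr =>
    intro a b c h h1 h2
    rw [word, List.sublist_append_iff] at h
    obtain ⟨u, v, huv, hu, hv⟩ := h
    have mu : ∀ x ∈ u, k + r.numNodes ≤ x ∧ x < k + r.numNodes + l.numNodes := by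
      intro x hx; exact (mem_word _ _ _).1 (hu.subset hx)
    have mv : ∀ x ∈ v, x = k + l.numNodes + r.numNodes ∨ (k ≤ x ∧ x < k + r.numNodes) := by
      intro x hx
      have := hv.subset hx
      rw [List.mem_cons, mem_word] at this
      exact this
    match u, huv with
    | [], h =>
      simp only [List.nil_append] at h
      subst h
      rw [List.sublist_cons_iff] at hv
      rcases hv with hv | ⟨v', e, hv⟩
      · exact hr k a b c hv h1 h2
      · simp only [List.cons.injEq] at e
        obtain ⟨e1, e2⟩ := e
        subst e2
        have := (mem_word r k c).1 (hv.subset (by simp))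
        omega
    | [x], h =>
      simp only [List.cons_append, List.nil_append, List.cons.injEq] at h
      obtain ⟨rfl, rfl⟩ := h
      have := mu a (by simp)
      have hb := mv b (by simp)
      have hc := mv c (by simp)
      omega
    | [x, y], h =>
      simp only [List.cons_append, List.nil_append, List.cons.injEq] at h
      obtain ⟨rfl, rfl, rfl⟩ := h
      have := mu a (by simp)
      have hb := mu b (by simp)
      have hc := mv c (by simp)
      omega
    | [x, y, z], h =>
      simp only [List.cons_append, List.nil_append, List.cons.injEq] at h
      obtain ⟨rfl, rfl, rfl, rfl⟩ := h
      exact hl _ a b c hu h1 h2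
    | x :: y :: z :: z' :: u', h =>
      simp at h

theorem word_inj (T T' : BT) (k : ℕ) (h : word T k = word T' k) : T = T' := by
  induction T generalizing k T' with
  | nil =>
    cases T' with
    | nil => rfl
    | node _ l r => simp [word] at h
  | node _ l r hl hr =>
    cases T' with
    | nil => simp [word] at h
    | node _ l' r' =>
      have hn : l.numNodes + r.numNodes = l'.numNodes + r'.numNodes := by
        have := congrArg List.length h
        rw [length_word, length_word] at this
        simpa using this
      simp only [word] at h
      have hm : k + l.numNodes + r.numNodes = k + l'.numNodes + r'.numNodes := by omega
      rw [← hm] at h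
      have n1 : k + l.numNodes + r.numNodes ∉ word l (k + r.numNodes) := by
        rw [mem_word]; omega
      have n2 : k + l.numNodes + r.numNodes ∉ word l' (k + r'.numNodes) := by
        rw [mem_word]; omega
      have hlen : (word l (k + r.numNodes)).length = (word l' (k + r'.numNodes)).length := by
        have := congrArg (List.idxOf (k + l.numNodes + r.numNodes)) h
        rw [List.idxOf_append_of_notMem n1, List.idxOf_append_of_notMem n2] at this
        simpa using this
      obtain ⟨e1, e2⟩ := List.append_inj h hlen
      simp only [List.cons.injEq, true_and] at e2
      have hr' := hr r' k e2
      subst hr'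
      rw [hl l' _ e1]

theorem word_surj (n : ℕ) : ∀ (k : ℕ) (w : List ℕ), w.Nodup → Av w →
    (∀ x, x ∈ w ↔ k ≤ x ∧ x < k + n) → ∃ T : BT, T.numNodes = n ∧ word T k = w := by
  induction n using Nat.strong_induction_on with
  | _ n ih =>
  intro k w hnd hav hmem
  rcases Nat.eq_zero_or_pos n with rfl | hn
  · refine ⟨.nil, rfl, ?_⟩
    cases w with
    | nil => rfl
    | cons x w => have := (hmem x).1 (by simp); omega
  · have hmax : k + n - 1 ∈ w := (hmem _).2 (by omega)
    obtain ⟨L, R, rfl⟩ := List.append_of_mem hmax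
    rw [List.nodup_append, List.nodup_cons] at hnd
    obtain ⟨ndL, ⟨hmR, ndR⟩, hdis⟩ := hnd
    have hLm : ∀ x ∈ L, k ≤ x ∧ x < k + n - 1 := by
      intro x hx
      have h1 := (hmem x).1 (by simp [hx])
      have h2 := hdis x hx (k + n - 1) (by simp)
      omega
    have hRm : ∀ x ∈ R, k ≤ x ∧ x < k + n - 1 := by
      intro x hx
      have h1 := (hmem x).1 (by simp [hx])
      have h2 : x ≠ k + n - 1 := fun h => hmR (h ▸ hx)
      omega
    have hLR : ∀ x ∈ L, ∀ y ∈ R, y < x := by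
      intro x hx y hy
      by_contra hcon
      have hne := hdis x hx y (by simp [hy])
      refine hav x (k + n - 1) y ?_ (by omega) (hRm y hy).2
      have s1 : [x] <+ L := List.singleton_sublist.2 hx
      have s2 : [y] <+ R := List.singleton_sublist.2 hy
      exact s1.append (s2.cons_cons (k + n - 1))
    have hcov : ∀ x, k ≤ x → x < k + n - 1 → x ∈ L ∨ x ∈ R := by
      intro x h1 h2
      have := (hmem x).2 (by omega)
      rw [List.mem_append, List.mem_cons] at this
      rcases this with h | h | h
      · exact Or.inl h
      · omega
      · exact Or.inr h
    have hRc : R.toFinset = Finset.Ico k (k + R.length) := by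
      refine Finset.eq_of_subset_of_card_le ?_ ?_
      · intro x hx
        rw [List.mem_toFinset] at hx
        have hsub : Finset.Ico k (x + 1) ⊆ R.toFinset := by
          intro y hy
          rw [Finset.mem_Ico] at hy
          rw [List.mem_toFinset]
          have := hRm x hx
          rcases hcov y hy.1 (by omega) with h | h
          · have := hLR y h x hx; omega
          · exact h
        have := Finset.card_le_card hsub
        rw [Nat.card_Ico, List.toFinset_card_of_nodup ndR] at this
        rw [Finset.mem_Ico]
        have := hRm x hx
        omega
      · rw [Nat.card_Ico, List.toFinset_card_of_nodup ndR]; omega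
    have hRmem : ∀ x, x ∈ R ↔ k ≤ x ∧ x < k + R.length := by
      intro x
      rw [← List.mem_toFinset, hRc, Finset.mem_Ico]
    have hlen : L.length + R.length + 1 = n := by
      have h1 : (L ++ (k + n - 1) :: R).toFinset = Finset.Ico k (k + n) := by
        ext x
        rw [List.mem_toFinset, hmem, Finset.mem_Ico]
      have h2 : (L ++ (k + n - 1) :: R).Nodup := by
        rw [List.nodup_append, List.nodup_cons]
        exact ⟨ndL, ⟨hmR, ndR⟩, hdis⟩
      have := List.toFinset_card_of_nodup h2
      rw [h1, Nat.card_Ico] at this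
      simp at this
      omega
    have hLmem : ∀ x, x ∈ L ↔ k + R.length ≤ x ∧ x < k + R.length + L.length := by
      intro x
      constructor
      · intro hx
        have h1 := hLm x hx
        have h2 : x ∉ R := fun h => hdis x hx x (by simp [h]) rfl
        rw [hRmem] at h2
        omega
      · intro hx
        rcases hcov x (by omega) (by omega) with h | h
        · exact h
        · rw [hRmem] at h; omega
    obtain ⟨l, hl1, hl2⟩ := ih L.length (by omega) (k + R.length) L ndL
      (fun a b c h => hav a b c (h.trans (List.sublist_append_left _ _))) hLmem
    obtain ⟨r, hr1, hr2⟩ := ih R.length (by omega) k R ndR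
      (fun a b c h => hav a b c
        (h.trans ((List.sublist_cons_self _ _).trans (List.sublist_append_right _ _)))) hRmem
    refine ⟨.node () l r, by simp [hl1, hr1]; omega, ?_⟩
    rw [word, hl1, hr1, hl2, hr2]
    congr 2
    omega

/-! ### chains -/

/-- one step of the pattern -/
def Step (i a b : ℕ) : Prop := if i % 3 = 2 then b < a else a < b

/-- `s` follows the pattern `UUDUUD...` starting at phase `i`. -/
def Alt : ℕ → List ℕ → Prop
  | _, [] => True
  | _, [_] => True
  | i, a :: b :: l => Step i a b ∧ Alt (i + 1) (b :: l)

theorem alt_mod {i j : ℕ} (h : i % 3 = j % 3) (s : List ℕ) : Alt i s → Alt j s := by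
  induction s generalizing i j with
  | nil => simp [Alt]
  | cons a s ih =>
    cases s with
    | nil => simp [Alt]
    | cons b s =>
      rintro ⟨h1, h2⟩
      refine ⟨?_, ih (by omega) h2⟩
      unfold Step at *
      rwa [← h]

theorem alt_append {i : ℕ} {s u : List ℕ} (h : Alt i (s ++ u)) :
    Alt i s ∧ Alt (i + s.length) u ∧
      (s ≠ [] → u ≠ [] → ∃ a ∈ s, ∃ b ∈ u, Step (i + s.length + 2) a b) := by
  induction s generalizing i with
  | nil => simpa [Alt] using h
  | cons a s ih =>
    cases s with
    | nil =>
      cases u with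
      | nil => simp [Alt]
      | cons b u =>
        obtain ⟨h1, h2⟩ := h
        refine ⟨trivial, h2, fun _ _ => ⟨a, by simp, b, by simp, ?_⟩⟩
        unfold Step at *
        rw [show (i + [a].length + 2) % 3 = i % 3 by simp; omega]
        exact h1
    | cons b s =>
      obtain ⟨h1, h2⟩ := h
      obtain ⟨k1, k2, k3⟩ := ih (i := i + 1) h2
      have e : i + 1 + (b :: s).length = i + (a :: b :: s).length := by simp; omega
      rw [e] at k2 k3
      refine ⟨⟨h1, k1⟩, k2, fun _ hu => ?_⟩
      obtain ⟨x, hx, y, hy, hs⟩ := k3 (by simp) hu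
      exact ⟨x, List.mem_cons_of_mem _ hx, y, hy, hs⟩

theorem alt_append_of {i : ℕ} {s u : List ℕ} (hs : Alt i s) (hu : Alt (i + s.length) u)
    (hj : ∀ a ∈ s, ∀ b ∈ u, Step (i + s.length + 2) a b) : Alt i (s ++ u) := by
  induction s generalizing i with
  | nil => simpa [Alt] using hu
  | cons a s ih =>
    cases s with
    | nil =>
      cases u with
      | nil => simp [Alt]
      | cons b u =>
        have := hj a (by simp) b (by simp)
        refine ⟨?_, hu⟩
        unfold Step at *
        rw [show (i + [a].length + 2) % 3 = i % 3 by simp; omega] at this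
        exact this
    | cons b s =>
      obtain ⟨h1, h2⟩ := hs
      have e : i + 1 + (b :: s).length = i + (a :: b :: s).length := by simp; omega
      refine ⟨h1, ih (i := i + 1) h2 ?_ ?_⟩
      · rw [e]; exact hu
      · rw [e]
        intro x hx y hy
        exact hj x (List.mem_cons_of_mem _ hx) y hy

theorem chain_iff (T : BT) (k m : ℕ) :
    (∃ s, s <+ word T k ∧ Alt 0 s ∧ s.length = m) ↔ m ≤ ell T := by
  induction T generalizing k m with
  | nil =>
    simp only [word, List.sublist_nil, ell]
    constructor
    · rintro ⟨s, rfl, _, rfl⟩; simp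
    · intro h; exact ⟨[], rfl, trivial, by simp; omega⟩
  | node _ l r hl hr =>
    have hx : ∀ x ∈ word l (k + r.numNodes), k + r.numNodes ≤ x ∧
        x < k + l.numNodes + r.numNodes := by
      intro x hx; rw [mem_word] at hx; omega
    have hy : ∀ x ∈ word r k, x < k + r.numNodes := by
      intro x hx; rw [mem_word] at hx; omega
    simp only [word, ell]
    generalize hM : k + l.numNodes + r.numNodes = M at hx
    have hrM : k + r.numNodes ≤ M := by omega
    constructor
    · rintro ⟨s, hs, ha, rfl⟩
      rw [List.sublist_append_iff] at hs
      obtain ⟨u, v, rfl, hu, hv⟩ := hs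
      obtain ⟨a1, a2, a3⟩ := alt_append ha
      have b1 := (hl (k + r.numNodes) u.length).1 ⟨u, hu, a1, rfl⟩
      rw [List.sublist_cons_iff] at hv
      rcases hv with hv | ⟨v, rfl, hv⟩
      · have : v = [] ∨ u.length % 3 = 0 := by
          by_contra hcon
          push Not at hcon
          obtain ⟨a, hau, b, hbv, hst⟩ := a3 (by rintro rfl; simp at hcon) hcon.1
          have h1 := hx a (hu.subset hau)
          have h2 := hy b (hv.subset hbv)
          unfold Step at hst
          split_ifs at hst <;> omega
        have : v.length = 0 ∨ (u.length % 3 = 0 ∧ v.length ≤ ell r) := by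
          rcases this with rfl | h
          · simp
          · exact Or.inr ⟨h, (hr k v.length).1 ⟨v, hv, alt_mod (by omega) _ a2, rfl⟩⟩
        rw [List.length_append]
        unfold ext
        split_ifs <;> omega
      · have c1 : u.length = 0 ∨ u.length % 3 ≠ 0 := by
          by_contra hcon
          push Not at hcon
          obtain ⟨a, hau, b, hbv, hst⟩ := a3 (by rintro rfl; simp at hcon) (by simp)
          have h1 := hx a (hu.subset hau)
          have h2 : b ≤ M := by
            rw [List.mem_cons] at hbv
            rcases hbv with rfl | hbv
            · exact le_rfl
            · have := hy b (hv.subset hbv); omega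
          have hst2 := ha
          rw [show u ++ M :: v = (u ++ [M]) ++ v by simp] at hst2
          obtain ⟨a, hau, b, hbv, hst⟩ := (alt_append (alt_append hst2).1).2.2
            (by rintro rfl; simp at hcon) (by simp)
          simp only [List.mem_singleton] at hbv
          have h1 := hx a (hu.subset hau)
          unfold Step at hst
          split_ifs at hst <;> omega
        rw [show u ++ M :: v = (u ++ [M]) ++ v by simp] at ha ⊢
        obtain ⟨a1', a2', a3'⟩ := alt_append ha
        have : v = [] ∨ (u ++ [M]).length % 3 = 0 := by
          by_contra hcon
          push Not at hcon
          obtain ⟨a, hau, b, hbv, hst⟩ := a3' (by simp) hcon.1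
          have h1 : k + r.numNodes ≤ a := by
            rw [List.mem_append, List.mem_singleton] at hau
            rcases hau with hau | rfl
            · exact (hx a (hu.subset hau)).1
            · exact hrM
          have h2 := hy b (hv.subset hbv)
          unfold Step at hst
          split_ifs at hst <;> omega
        have : v.length = 0 ∨ ((u ++ [M]).length % 3 = 0 ∧ v.length ≤ ell r) := by
          rcases this with rfl | h
          · simp
          · exact Or.inr ⟨h, (hr k v.length).1 ⟨v, hv, alt_mod (by omega) _ a2', rfl⟩⟩
        simp only [List.length_append, List.length_singleton] at this ⊢
        unfold ext
        split_ifs <;> omega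
    · intro hm
      have key : ∀ m, m ≤ ext (ell l) →
          ∃ s, s <+ word l (k + r.numNodes) ++ [M] ∧ Alt 0 s ∧ s.length = m := by
        intro m hm
        by_cases h : m ≤ ell l
        · obtain ⟨s, h1, h2, h3⟩ := (hl (k + r.numNodes) m).2 h
          exact ⟨s, h1.trans (List.sublist_append_left _ _), h2, h3⟩
        · have hh : m = ell l + 1 ∧ (ell l = 0 ∨ ell l % 3 ≠ 0) := by
            unfold ext at hm
            split_ifs at hm <;> omega
          obtain ⟨s, h1, h2, h3⟩ := (hl (k + r.numNodes) (ell l)).2 le_rfl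
          refine ⟨s ++ [M], h1.append (List.Sublist.refl _), alt_append_of h2 trivial ?_, ?_⟩
          · intro a ha b hb
            simp only [List.mem_singleton] at hb
            have h1 := hx a (h1.subset ha)
            have : s.length ≠ 0 := by
              rintro h
              rw [List.length_eq_zero_iff] at h
              subst h
              simp at ha
            unfold Step
            split_ifs <;> omega
          · simp; omega
      rw [show word l (k + r.numNodes) ++ M :: word r k
        = (word l (k + r.numNodes) ++ [M]) ++ word r k by simp]
      by_cases h : m ≤ ext (ell l)
      · obtain ⟨s, h1, h2, h3⟩ := key m h
        exact ⟨s, h1.trans (List.sublist_append_left _ _), h2, h3⟩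
      · obtain ⟨s, h1, h2, h3⟩ := key (3 * (ext (ell l) / 3)) (by omega)
        obtain ⟨u, h4, h5, h6⟩ := (hr k (m - 3 * (ext (ell l) / 3))).2 (by omega)
        refine ⟨s ++ u, h1.append h4, alt_append_of h2 (alt_mod (by omega) _ h5) ?_, ?_⟩
        · intro a ha b hb
          have q1 : k + r.numNodes ≤ a := by
            have := h1.subset ha
            rw [List.mem_append, List.mem_singleton] at this
            rcases this with hau | rfl
            · exact (hx a hau).1
            · exact hrM
          have q2 := hy b (h4.subset hb)
          unfold Step
          split_ifs <;> omega
        · simp; omega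

theorem alt_iff (i : ℕ) (s : List ℕ) : Alt i s ↔
    ∀ (j : ℕ) (h : j + 1 < s.length), Step (i + j) s[j] s[j + 1] := by
  induction s generalizing i with
  | nil => simp [Alt]
  | cons a s ih =>
    cases s with
    | nil => simp [Alt]
    | cons b s =>
      rw [Alt, ih]
      constructor
      · rintro ⟨h1, h2⟩ j hj
        cases j with
        | zero => exact h1
        | succ j =>
          have := h2 j (by simpa using hj)
          rw [show i + (j + 1) = i + 1 + j by omega]
          simpa using this
      · intro h
        refine ⟨h 0 (by simp), fun j hj => ?_⟩
        have := h (j + 1) (by simpa using hj)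
        rw [show i + (j + 1) = i + 1 + j by omega] at this
        simpa using this

/-! ### the link with permutations -/

theorem sublist_ofFn {n : ℕ} (g : Fin n → ℕ) (s : List ℕ) :
    s <+ List.ofFn g ↔ ∃ f : Fin s.length → Fin n, StrictMono f ∧ ∀ i, s.get i = g (f i) := by
  rw [List.sublist_iff_exists_fin_orderEmbedding_get_eq]
  constructor
  · rintro ⟨f, hf⟩
    refine ⟨fun i => Fin.cast (by simp) (f i), ?_, ?_⟩
    · intro i j hij
      exact f.strictMono hij
    · intro i
      rw [hf i]
      simp
      rfl
  · rintro ⟨f, hf, hg⟩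
    have hm : StrictMono (fun i => (Fin.cast (by simp) (f i) : Fin (List.ofFn g).length)) := by
      intro i j hij
      exact hf hij
    refine ⟨OrderEmbedding.ofStrictMono _ hm, ?_⟩
    intro i
    rw [hg i]
    simp

/-- the word of a permutation -/
def wd {n : ℕ} (σ : Equiv.Perm (Fin n)) : List ℕ := List.ofFn (fun i => (σ i : ℕ))

theorem nodup_wd {n : ℕ} (σ : Equiv.Perm (Fin n)) : (wd σ).Nodup := by
  rw [wd, List.nodup_ofFn]
  intro i j h
  exact σ.injective (Fin.ext h)

theorem mem_wd {n : ℕ} (σ : Equiv.Perm (Fin n)) (x : ℕ) : x ∈ wd σ ↔ 0 ≤ x ∧ x < 0 + n := by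
  rw [wd, List.mem_ofFn]
  constructor
  · rintro ⟨i, rfl⟩
    have := (σ i).2
    simp
  · rintro ⟨_, h⟩
    exact ⟨σ.symm ⟨x, by omega⟩, by simp⟩

theorem avoids_iff {n : ℕ} (σ : Equiv.Perm (Fin n)) : Avoids132 σ ↔ Av (wd σ) := by
  constructor
  · intro h a b c hs h1 h2
    obtain ⟨f, hf, hg⟩ := (sublist_ofFn _ _).1 hs
    have e0 := hg ⟨0, by simp⟩
    have e1 := hg ⟨1, by simp⟩
    have e2 := hg ⟨2, by simp⟩
    simp at e0 e1 e2
    refine h ⟨f ⟨0, by simp⟩, f ⟨1, by simp⟩, f ⟨2, by simp⟩, hf ?_, hf ?_, ?_, ?_⟩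
    · simp [Fin.lt_def]
    · simp [Fin.lt_def]
    · rw [Fin.lt_def]
      simp; omega
    · rw [Fin.lt_def]
      simp; omega
  · rintro h ⟨i, j, k, hij, hjk, h1, h2⟩
    refine h (σ i) (σ j) (σ k) ?_ h1 h2
    refine (sublist_ofFn _ _).2 ⟨![i, j, k], ?_, ?_⟩
    · rw [Fin.strictMono_iff_lt_succ]
      intro a
      fin_cases a
      · exact hij
      · exact hjk
    · intro a
      fin_cases a <;> rfl

theorem hasRep_iff {n : ℕ} (σ : Equiv.Perm (Fin n)) (k : ℕ) :
    HasRepUUD σ k ↔ ∃ s, s <+ wd σ ∧ Alt 0 s ∧ s.length = 3 * k + 1 := by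
  constructor
  · rintro ⟨f, hf, hp⟩
    refine ⟨List.ofFn (fun i : Fin (3 * k + 1) => (σ (f i) : ℕ)), ?_, ?_, by simp⟩
    · refine (sublist_ofFn _ _).2 ⟨fun i => f i, ?_, ?_⟩
      · intro i j hij
        have := j.2
        simp only [List.length_ofFn] at this
        exact hf i j hij (by omega)
      · intro i
        rw [List.get_eq_getElem, List.getElem_ofFn]
    · rw [alt_iff]
      intro j hj
      simp only [List.length_ofFn] at hj
      have := hp j (by omega)
      rw [List.getElem_ofFn, List.getElem_ofFn]
      simpa only [Step, Nat.zero_add, Fin.lt_def] using this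
  · rintro ⟨s, hs, ha, hl⟩
    obtain ⟨f, hf, hg⟩ := (sublist_ofFn _ _).1 hs
    rw [alt_iff] at ha
    refine ⟨fun i => f ⟨min i (3 * k), by omega⟩, ?_, ?_⟩
    · intro a b hab hb
      refine hf ?_
      rw [Fin.lt_def]
      simp only
      omega
    · intro i hi
      have h1 := ha i (by omega)
      have g0 := hg ⟨i, by omega⟩
      have g1 := hg ⟨i + 1, by omega⟩
      simp only [List.get_eq_getElem] at g0 g1
      rw [g0, g1] at h1
      have m0 : min i (3 * k) = i := by omega
      have m1 : min (i + 1) (3 * k) = i + 1 := by omega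
      simp only [m0, m1]
      simpa [Step] using h1

theorem buud_eq {n : ℕ} (σ : Equiv.Perm (Fin n)) (T : BT) (h : word T 0 = wd σ) :
    BUUD σ = (ell T - 1) / 3 := by
  have key : ∀ k, HasRepUUD σ k ↔ 3 * k + 1 ≤ ell T := by
    intro k
    rw [hasRep_iff, ← h, chain_iff]
  have hset : {m : ℕ | ∃ k : ℕ, 1 ≤ k ∧ m = 3 * k + 1 ∧ HasRepUUD σ k}
      = {m : ℕ | ∃ k : ℕ, 1 ≤ k ∧ m = 3 * k + 1 ∧ 3 * k + 1 ≤ ell T} := by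
    simp only [key]
  unfold BUUD LUUD
  rw [hset]
  by_cases hb : 4 ≤ ell T
  · have : IsGreatest {m : ℕ | ∃ k : ℕ, 1 ≤ k ∧ m = 3 * k + 1 ∧ 3 * k + 1 ≤ ell T}
        (3 * ((ell T - 1) / 3) + 1) := by
      constructor
      · exact ⟨(ell T - 1) / 3, by omega, rfl, by omega⟩
      · rintro m ⟨k, h1, rfl, h3⟩
        omega
    rw [this.csSup_eq]
    omega
  · have : {m : ℕ | ∃ k : ℕ, 1 ≤ k ∧ m = 3 * k + 1 ∧ 3 * k + 1 ≤ ell T} = ∅ := by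
      ext m
      simp only [Set.mem_ofPred_eq, Set.mem_empty_iff_false, iff_false]
      rintro ⟨k, h1, rfl, h3⟩
      omega
    rw [this]
    simp
    omega

theorem exists_tree {n : ℕ} (σ : Equiv.Perm (Fin n)) (h : Avoids132 σ) :
    ∃ T : BT, T.numNodes = n ∧ word T 0 = wd σ :=
  word_surj n 0 (wd σ) (nodup_wd σ) ((avoids_iff σ).1 h) (mem_wd σ)

theorem exists_perm (T : BT) {n : ℕ} (hn : T.numNodes = n) :
    ∃ σ : Equiv.Perm (Fin n), word T 0 = wd σ := by
  have hlen := length_word T 0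
  have hm : ∀ i (h : i < (word T 0).length), (word T 0)[i] < n := by
    intro i hi
    have := (mem_word T 0 _).1 (List.getElem_mem hi)
    omega
  let f : Fin n → Fin n := fun i => ⟨(word T 0)[i.1]'(by omega), hm _ _⟩
  have hf : Function.Injective f := by
    intro i j hij
    have h1 := congrArg Fin.val hij
    simp only [f] at h1
    have := (List.Nodup.getElem_inj_iff (nodup_word T 0)).1 h1
    exact Fin.ext this
  refine ⟨Equiv.ofBijective f (Finite.injective_iff_bijective.1 hf), ?_⟩
  refine List.ext_getElem (by simp [wd]; omega) ?_
  intro i h1 h2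
  simp [wd, f]

open Classical in
theorem sum_eq (n : ℕ) :
    ∑ σ ∈ Finset.univ.filter (fun σ : Equiv.Perm (Fin n) => Avoids132 σ), BUUD σ
      = ∑ T ∈ treesOfNumNodesEq n, (ell T - 1) / 3 := by
  refine Finset.sum_bij
    (fun σ hσ => (exists_tree σ (Finset.mem_filter.1 hσ).2).choose) ?_ ?_ ?_ ?_
  · intro σ hσ
    rw [mem_treesOfNumNodesEq]
    exact (exists_tree σ (Finset.mem_filter.1 hσ).2).choose_spec.1
  · intro σ hσ τ hτ h
    have h1 := (exists_tree σ (Finset.mem_filter.1 hσ).2).choose_spec.2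
    have h2 := (exists_tree τ (Finset.mem_filter.1 hτ).2).choose_spec.2
    rw [h, h2, wd, wd, List.ofFn_inj] at h1
    ext i
    exact (congrFun h1 i).symm
  · intro T hT
    rw [mem_treesOfNumNodesEq] at hT
    obtain ⟨σ, hσ⟩ := exists_perm T hT
    have hav : Avoids132 σ := by
      rw [avoids_iff, ← hσ]
      exact av_word T 0
    refine ⟨σ, by simp [hav], ?_⟩
    have := (exists_tree σ hav).choose_spec.2
    exact word_inj _ _ 0 (this.trans hσ.symm)
  · intro σ hσ
    exact buud_eq σ _ (exists_tree σ (Finset.mem_filter.1 hσ).2).choose_spec.2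

end UUD

open Classical in
/-- The generating function `B(t) = Σ C_n b_n t^n` (with `C_n b_n` the total number
of complete `UUD` blocks over `S_n(132)`) satisfies the stated closed form, where
`C(t) = (1-√(1-4t))/(2t)` is the Catalan generating function. -/
theorem BUUD_generating_function (t : ℝ) (ht0 : 0 < t) (ht : t < 1 / 4) :
    HasSum (fun n : ℕ =>
      ((∑ σ ∈ Finset.univ.filter (fun σ : Equiv.Perm (Fin n) => Avoids132 σ), BUUD σ : ℕ) : ℝ)
        * t ^ n)
      (let C := (1 - Real.sqrt (1 - 4 * t)) / (2 * t)
       t ^ 2 * (C - 1) ^ 2 /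
        (((1 - t) * (1 - 2 * t * C) + t) * (1 - t - t * C) - t ^ 2 * (C - 1))) := by
  simp only [UUD.sum_eq]
  exact UUD.tree_gf t ht0 ht
end
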